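/- Let ε22 = X² + 3X + 3, ε23 = X² + 3, ε6 = X⁶ + 3X⁵ + 9X⁴ + 15X³ + 27X² + 27X + 27, and ε12 = X¹² + 6X¹¹ + 18X¹⁰ + 39X⁹ + 63X⁸ + 81X⁷ + 117X⁶ + 243X⁵ + 567X⁴ + 1053X³ + 1458X² + 1458X + 729. Then for every n ≥ 3 (with no coprimality restriction on n) and every finite field K with 3^n elements, the number of a ∈ K with T_1(a) = 0, T_2(a) = 0 and T_3(a) = 0 equals 3^{n−3} − (1/27)·(2ρ_n(ε22) + ρ_n(ε23) + 2ρ_n(ε6) + 2ρ_n(ε12)), as complex numbers. -/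

import Mathlib

open Polynomial

set_option linter.unusedSimpArgs false

/-- For a finite field `K` with `3^n` elements, the `k`-th trace function
`T_k(a) = Σ_S ∏_{i ∈ S} a^(3^i)`, the sum over all `k`-element subsets `S` of `{0,…,n-1}`. -/
noncomputable def traceFn (q n k : ℕ) {K : Type*} [CommRing K] (a : K) : K :=
  ∑ S ∈ Finset.powersetCard k (Finset.range n), ∏ i ∈ S, a ^ (q ^ i)

/-- `ρ_n(γ)`: the sum of the `n`-th powers of the complex roots of `γ ∈ ℤ[X]`,
counted with multiplicity. -/
noncomputable def rho (n : ℕ) (γ : Polynomial ℤ) : ℂ :=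
  ((γ.map (Int.castRingHom ℂ)).roots.map (· ^ n)).sum

noncomputable def e22 : Polynomial ℤ := X ^ 2 + 3 * X + 3
noncomputable def e23 : Polynomial ℤ := X ^ 2 + 3
noncomputable def e6 : Polynomial ℤ :=
  X ^ 6 + 3 * X ^ 5 + 9 * X ^ 4 + 15 * X ^ 3 + 27 * X ^ 2 + 27 * X + 27
noncomputable def e12 : Polynomial ℤ :=
  X ^ 12 + 6 * X ^ 11 + 18 * X ^ 10 + 39 * X ^ 9 + 63 * X ^ 8 + 81 * X ^ 7 + 117 * X ^ 6
    + 243 * X ^ 5 + 567 * X ^ 4 + 1053 * X ^ 3 + 1458 * X ^ 2 + 1458 * X + 729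


abbrev F3 := ZMod 3

/-- second logarithm, already multiplied by 3 -/
def logB (c1 c2 : F3) : ZMod 9 := 3 * ((c2 - c1 + c1 * c1).val : ZMod 9)
def logA (c1 c2 c3 : F3) : ZMod 9 :=
  (c1.val : ZMod 9) + 3 * ((c3 - c1 * (c2 - c1 + c1 * c1)).val : ZMod 9)

theorem logB_mul : ∀ a1 a2 b1 b2 : F3,
    logB (a1 + b1) (a2 + a1 * b1 + b2) = logB a1 a2 + logB b1 b2 := by decide +kernel

theorem logA_mul : ∀ a1 a2 a3 b1 b2 b3 : F3,
    logA (a1 + b1) (a2 + a1 * b1 + b2) (a3 + a2 * b1 + a1 * b2 + b3)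
      = logA a1 a2 a3 + logA b1 b2 b3 := by decide +kernel

theorem log_eq_zero : ∀ a1 a2 a3 : F3,
    (logA a1 a2 a3 = 0 ∧ logB a1 a2 = 0) ↔ (a1 = 0 ∧ a2 = 0 ∧ a3 = 0) := by decide +kernel

/-- coefficients of the reversal -/
noncomputable def rc (f : F3[X]) (k : ℕ) : F3 := f.reverse.coeff k

theorem rc_zero {f : F3[X]} (hf : f.Monic) : rc f 0 = 1 := by
  simp [rc, hf.leadingCoeff]

theorem rc_mul_one {f g : F3[X]} (hf : f.Monic) (hg : g.Monic) :
    rc (f * g) 1 = rc f 1 + rc g 1 := by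
  have h1 := rc_zero hf
  have h2 := rc_zero hg
  unfold rc at *
  rw [reverse_mul_of_domain, coeff_mul, Finset.Nat.sum_antidiagonal_eq_sum_range_succ_mk]
  simp only [Finset.sum_range_succ, Finset.sum_range_zero, h1, h2]
  simp [h1]
  ring

theorem rc_mul_two {f g : F3[X]} (hf : f.Monic) (hg : g.Monic) :
    rc (f * g) 2 = rc f 2 + rc f 1 * rc g 1 + rc g 2 := by
  have h1 := rc_zero hf
  have h2 := rc_zero hg
  unfold rc at *
  rw [reverse_mul_of_domain, coeff_mul, Finset.Nat.sum_antidiagonal_eq_sum_range_succ_mk]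
  simp only [Finset.sum_range_succ, Finset.sum_range_zero, h1]
  simp only [Nat.sub_self, h2, Nat.reduceSub, Nat.sub_zero]
  ring

theorem rc_mul_three {f g : F3[X]} (hf : f.Monic) (hg : g.Monic) :
    rc (f * g) 3 = rc f 3 + rc f 2 * rc g 1 + rc f 1 * rc g 2 + rc g 3 := by
  have h1 := rc_zero hf
  have h2 := rc_zero hg
  unfold rc at *
  rw [reverse_mul_of_domain, coeff_mul, Finset.Nat.sum_antidiagonal_eq_sum_range_succ_mk]
  simp only [Finset.sum_range_succ, Finset.sum_range_zero, h1]
  simp only [Nat.sub_self, h2, Nat.reduceSub, Nat.sub_zero]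
  ring

/-- the character -/
noncomputable def ch (e : AddChar (ZMod 9) ℂ) (i j : ZMod 9) (f : F3[X]) : ℂ :=
  e (i * logA (rc f 1) (rc f 2) (rc f 3) + j * logB (rc f 1) (rc f 2))

theorem ch_mul (e : AddChar (ZMod 9) ℂ) (i j : ZMod 9) {f g : F3[X]}
    (hf : f.Monic) (hg : g.Monic) : ch e i j (f * g) = ch e i j f * ch e i j g := by
  unfold ch
  rw [rc_mul_one hf hg, rc_mul_two hf hg, rc_mul_three hf hg, logA_mul, logB_mul,
    ← AddChar.map_add_eq_mul]
  congr 1; ring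

theorem ch_one (e : AddChar (ZMod 9) ℂ) (i j : ZMod 9) : ch e i j 1 = 1 := by
  have : ∀ k, k ≠ 0 → rc 1 k = 0 := by
    intro k hk
    have : (1 : F3[X]).reverse = 1 := by simpa using reverse_C (1 : F3)
    simp [rc, this, coeff_one, hk]
  simp [ch, this, show logA 0 0 0 = 0 by decide, show logB 0 0 = 0 by decide]

/-- monic polynomial with given coefficients, from the top down -/
noncomputable def mk (m : ℕ) (c : Fin m → F3) : F3[X] :=
  X ^ m + ∑ i : Fin m, C (c i) * X ^ (m - 1 - (i : ℕ))

theorem mk_low (m : ℕ) (c : Fin m → F3) :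
    (∑ i : Fin m, C (c i) * X ^ (m - 1 - (i : ℕ))).degree < (m : WithBot ℕ) := by
  refine (degree_sum_le _ _).trans_lt ?_
  rw [Finset.sup_lt_iff (by exact WithBot.bot_lt_coe m)]
  intro i _
  refine (degree_C_mul_X_pow_le _ _).trans_lt ?_
  have := i.2
  exact_mod_cast (by omega)

theorem mk_monic (m : ℕ) (c : Fin m → F3) : (mk m c).Monic :=
  monic_X_pow_add (mk_low m c)

theorem mk_natDegree (m : ℕ) (c : Fin m → F3) : (mk m c).natDegree = m := by
  unfold mk
  have h : (X ^ m + ∑ i : Fin m, C (c i) * X ^ (m - 1 - (i : ℕ)) : F3[X]).degree = (m : WithBot ℕ) := by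
    rw [degree_add_eq_left_of_degree_lt (by rw [degree_X_pow]; exact mk_low m c), degree_X_pow]
  exact natDegree_eq_of_degree_eq_some h

theorem mk_coeff (m : ℕ) (c : Fin m → F3) (i : Fin m) :
    (mk m c).coeff (m - 1 - (i : ℕ)) = c i := by
  have hi := i.2
  unfold mk
  rw [coeff_add, coeff_X_pow, if_neg (by omega), zero_add, finsetSum_coeff,
    Finset.sum_eq_single i]
  · simp
  · intro b _ hb
    rw [coeff_C_mul_X_pow, if_neg]
    have := b.2
    intro h
    exact hb (Fin.ext (by omega))
  · simp

theorem rc_mk (m : ℕ) (c : Fin m → F3) (k : ℕ) :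
    rc (mk m c) (k + 1) = if h : k < m then c ⟨k, h⟩ else 0 := by
  unfold rc
  split_ifs with h
  · rw [coeff_reverse, mk_natDegree, revAt_le (by omega)]
    rw [← mk_coeff m c ⟨k, h⟩]
    congr 1
    simp
    omega
  · apply coeff_eq_zero_of_natDegree_lt
    have := reverse_natDegree_le (mk m c)
    rw [mk_natDegree] at this
    omega

theorem mk_injective (m : ℕ) : Function.Injective (mk m) := by
  intro c d h
  ext i
  rw [← mk_coeff m c i, h, mk_coeff]

open Classical in
noncomputable def Mon (m : ℕ) : Finset F3[X] := Finset.univ.image (mk m)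

theorem mem_Mon {m : ℕ} {f : F3[X]} : f ∈ Mon m ↔ f.Monic ∧ f.natDegree = m := by
  unfold Mon
  simp only [Finset.mem_image, Finset.mem_univ, true_and]
  constructor
  · rintro ⟨c, rfl⟩
    exact ⟨mk_monic m c, mk_natDegree m c⟩
  · rintro ⟨hf, rfl⟩
    refine ⟨fun i => f.coeff (f.natDegree - 1 - i), ?_⟩
    set m := f.natDegree with hm
    ext k
    rcases lt_trichotomy k m with h | h | h
    · have := mk_coeff m (fun i => f.coeff (m - 1 - i)) ⟨m - 1 - k, by omega⟩
      simp only at this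
      rwa [show m - 1 - (m - 1 - k) = k by omega] at this
    · have h1 := (mk_monic m (fun i => f.coeff (m - 1 - i)))
      unfold Monic leadingCoeff at h1
      rw [mk_natDegree] at h1
      rw [h, h1, hm, hf.coeff_natDegree]
    · rw [coeff_eq_zero_of_natDegree_lt (by rwa [mk_natDegree]),
        coeff_eq_zero_of_natDegree_lt (by omega)]

theorem sum_Mon (m : ℕ) (g : F3[X] → ℂ) : ∑ f ∈ Mon m, g f = ∑ c : Fin m → F3, g (mk m c) := by
  unfold Mon
  rw [Finset.sum_image]
  intro a _ b _ h
  exact mk_injective m h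

theorem sum_cons (m : ℕ) (g : (Fin (m + 1) → F3) → ℂ) :
    ∑ c, g c = ∑ x : F3, ∑ c : Fin m → F3, g (Fin.cons x c) := by
  rw [← Fintype.sum_prod_type']
  exact (Fintype.sum_equiv (Fin.consEquiv (fun _ => F3)) _ _ (fun x => rfl)).symm

noncomputable def AA (g : F3[X] → ℂ) (m : ℕ) : ℂ := ∑ f ∈ Mon m, g f

noncomputable def chv (e : AddChar (ZMod 9) ℂ) (i j : ZMod 9) (x y z : F3) : ℂ :=
  e (i * logA x y z + j * logB x y)

theorem AA_zero (g : F3[X] → ℂ) (h : g 1 = 1) : AA g 0 = 1 := by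
  unfold AA
  rw [sum_Mon]
  simp [mk, h]

theorem AA_one (e : AddChar (ZMod 9) ℂ) (i j : ZMod 9) :
    AA (ch e i j) 1 = ∑ x : F3, chv e i j x 0 0 := by
  unfold AA
  rw [sum_Mon, sum_cons]
  simp only [ch, show (3 : ℕ) = 2 + 1 from rfl, show (2 : ℕ) = 1 + 1 from rfl]
  have h1 : ∀ c, rc (mk 1 c) 1 = c 0 := fun c => by simpa using rc_mk 1 c 0
  have h2 : ∀ c, rc (mk 1 c) 2 = 0 := fun c => by simpa using rc_mk 1 c 1
  have h3 : ∀ c, rc (mk 1 c) 3 = 0 := fun c => by simpa using rc_mk 1 c 2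
  simp [h1, h2, h3, chv]

theorem AA_two (e : AddChar (ZMod 9) ℂ) (i j : ZMod 9) :
    AA (ch e i j) 2 = ∑ x : F3, ∑ y : F3, chv e i j x y 0 := by
  unfold AA
  rw [sum_Mon, sum_cons]
  simp_rw [sum_cons]
  have h1 : ∀ c, rc (mk 2 c) 1 = c 0 := fun c => by simpa using rc_mk 2 c 0
  have h2 : ∀ c, rc (mk 2 c) 2 = c 1 := fun c => by simpa using rc_mk 2 c 1
  have h3 : ∀ c, rc (mk 2 c) 3 = 0 := fun c => by simpa using rc_mk 2 c 2
  simp only [ch, h1, h2, h3, chv]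
  have e1 : (1 : Fin 2) = Fin.succ 0 := rfl
  simp only [e1, Fin.cons_succ, Fin.cons_zero]
  simp

theorem AA_three (e : AddChar (ZMod 9) ℂ) (i j : ZMod 9) (m : ℕ) :
    AA (ch e i j) (m + 3) = 3 ^ m * ∑ x : F3, ∑ y : F3, ∑ z : F3, chv e i j x y z := by
  unfold AA
  rw [sum_Mon, sum_cons]
  simp_rw [sum_cons]
  have h1 : ∀ c, rc (mk (m+3) c) 1 = c 0 := fun c => by simpa using rc_mk (m+3) c 0
  have h2 : ∀ c, rc (mk (m+3) c) 2 = c 1 := fun c => by simpa using rc_mk (m+3) c 1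
  have h3 : ∀ c, rc (mk (m+3) c) 3 = c 2 := fun c => by
    rw [rc_mk (m+3) c 2, dif_pos (by omega)]; rfl
  simp only [ch, h1, h2, h3, chv]
  have e1 : (1 : Fin (m+3)) = Fin.succ 0 := rfl
  have e2 : (2 : Fin (m+3)) = Fin.succ (Fin.succ 0) := rfl
  simp only [e1, e2, Fin.cons_succ, Fin.cons_zero]
  simp [Finset.mul_sum, ZMod.card]

open Classical in
noncomputable def Irr (d : ℕ) : Finset F3[X] := (Mon d).filter Irreducible

theorem mem_Irr {d : ℕ} {P : F3[X]} :
    P ∈ Irr d ↔ (P.Monic ∧ P.natDegree = d) ∧ Irreducible P := by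
  simp [Irr, mem_Mon]

noncomputable def SS (g : F3[X] → ℂ) (k : ℕ) : ℂ :=
  ∑ p ∈ k.divisorsAntidiagonal, ∑ P ∈ Irr p.1, (p.1 : ℂ) * g P ^ p.2

open Classical UniqueFactorizationMonoid in
theorem pow_dvd_iff_count {f P : F3[X]} (hf : f.Monic) (hP : P.Monic) (hi : Irreducible P)
    (j : ℕ) : P ^ j ∣ f ↔ j ≤ (normalizedFactors f).count P := by
  rw [dvd_iff_normalizedFactors_le_normalizedFactors (pow_ne_zero _ hi.ne_zero) hf.ne_zero,
    normalizedFactors_pow, normalizedFactors_irreducible hi, hP.normalize_eq_self,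
    Multiset.nsmul_singleton, Multiset.le_count_iff_replicate_le]

open Classical UniqueFactorizationMonoid in
theorem degree_eq {n : ℕ} {f : F3[X]} (hf : f ∈ Mon n) :
    (n : ℂ) = ∑ d ∈ Finset.Icc 1 n, ∑ P ∈ Irr d, ∑ j ∈ Finset.Icc 1 n,
      if P ^ j ∣ f then (d : ℂ) else 0 := by
  rw [mem_Mon] at hf
  obtain ⟨hm, hn⟩ := hf
  have hne := hm.ne_zero
  have h1 : ∀ d ∈ Finset.Icc 1 n, ∀ P ∈ Irr d, (∑ j ∈ Finset.Icc 1 n,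
      if P ^ j ∣ f then (d : ℂ) else 0) = (normalizedFactors f).count P * (P.natDegree : ℂ) := by
    intro d hd P hP
    rw [mem_Irr] at hP
    obtain ⟨⟨hPm, hPd⟩, hPi⟩ := hP
    rw [Finset.mem_Icc] at hd
    have hc : (normalizedFactors f).count P ≤ n := by
      have h := (pow_dvd_iff_count hm hPm hPi _).2 le_rfl
      have h2 := natDegree_le_of_dvd h hne
      rw [natDegree_pow, hPd, hn] at h2
      nlinarith
    simp_rw [pow_dvd_iff_count hm hPm hPi]
    rw [← Finset.sum_filter, Finset.sum_const, nsmul_eq_mul, hPd]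
    congr 2
    have : (Finset.Icc 1 n).filter (fun j => j ≤ (normalizedFactors f).count P)
        = Finset.Icc 1 ((normalizedFactors f).count P) := by
      ext j; simp only [Finset.mem_filter, Finset.mem_Icc]; omega
    rw [this]; simp
  rw [Finset.sum_congr rfl (fun d hd => Finset.sum_congr rfl (h1 d hd))]
  rw [← Finset.sum_biUnion]
  swap
  · intro a _ b _ hab
    simp only [Function.onFun]
    rw [Finset.disjoint_left]
    intro P ha hb
    rw [mem_Irr] at ha hb
    exact hab (ha.1.2.symm.trans hb.1.2)
  have h2 : f.natDegree = ((normalizedFactors f).map natDegree).sum := by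
    conv_lhs => rw [← hm.normalize_eq_self, ← prod_normalizedFactors_eq hne]
    apply natDegree_multiset_prod
    exact zero_notMem_normalizedFactors f
  have h3 : ∀ P, P ∣ f → P.natDegree ≤ n := fun P hd => hn ▸ natDegree_le_of_dvd hd hne
  have h4 : (n : ℂ) = (((normalizedFactors f).map natDegree).sum : ℕ) := by rw [← h2, hn]
  rw [h4, Finset.sum_multiset_map_count]
  push_cast
  simp only [nsmul_eq_mul]
  push_cast
  apply Finset.sum_subset
  · intro P hP
    rw [Multiset.mem_toFinset] at hP
    have hi := irreducible_of_normalized_factor P hP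
    have hd := dvd_of_mem_normalizedFactors hP
    have hmon : P.Monic := by
      have := normalize_normalized_factor P hP
      rw [← this]; exact monic_normalize hi.ne_zero
    rw [Finset.mem_biUnion]
    refine ⟨P.natDegree, ?_, mem_Irr.2 ⟨⟨hmon, rfl⟩, hi⟩⟩
    rw [Finset.mem_Icc]
    exact ⟨hi.natDegree_pos, h3 P hd⟩
  · intro P _ hP
    rw [Multiset.mem_toFinset] at hP
    simp [Multiset.count_eq_zero_of_notMem hP]

theorem g_pow {g : F3[X] → ℂ} (h1 : g 1 = 1)
    (hg : ∀ f h : F3[X], f.Monic → h.Monic → g (f * h) = g f * g h) {P : F3[X]} (hP : P.Monic)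
    (j : ℕ) : g (P ^ j) = g P ^ j := by
  induction j with
  | zero => simp [h1]
  | succ j ih => rw [pow_succ, hg _ _ (hP.pow j) hP, ih, pow_succ]

open Classical in
theorem sum_dvd {g : F3[X] → ℂ}
    (hg : ∀ f h : F3[X], f.Monic → h.Monic → g (f * h) = g f * g h) {Q : F3[X]} (hQ : Q.Monic)
    (n : ℕ) : (∑ f ∈ Mon n, if Q ∣ f then g f else 0)
      = if Q.natDegree ≤ n then g Q * AA g (n - Q.natDegree) else 0 := by
  split_ifs with h
  · rw [← Finset.sum_filter, AA, Finset.mul_sum]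
    symm
    apply Finset.sum_bij (fun f _ => Q * f)
    · intro f hf
      rw [mem_Mon] at hf
      rw [Finset.mem_filter, mem_Mon]
      refine ⟨⟨hQ.mul hf.1, ?_⟩, dvd_mul_right _ _⟩
      rw [hQ.natDegree_mul hf.1, hf.2]; omega
    · intro a _ b _ hab
      exact mul_left_cancel₀ hQ.ne_zero hab
    · intro f hf
      rw [Finset.mem_filter, mem_Mon] at hf
      obtain ⟨⟨hm, hn⟩, r, rfl⟩ := hf
      have hr := hQ.of_mul_monic_left hm
      refine ⟨r, ?_, rfl⟩
      rw [mem_Mon]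
      refine ⟨hr, ?_⟩
      rw [hQ.natDegree_mul hr] at hn; omega
    · intro f hf
      rw [mem_Mon] at hf
      exact (hg _ _ hQ hf.1).symm
  · apply Finset.sum_eq_zero
    intro f hf
    rw [mem_Mon] at hf
    rw [if_neg]
    intro hd
    exact h (hf.2 ▸ natDegree_le_of_dvd hd hf.1.ne_zero)

open Classical in
theorem newton {g : F3[X] → ℂ} (h1 : g 1 = 1)
    (hg : ∀ f h : F3[X], f.Monic → h.Monic → g (f * h) = g f * g h) (n : ℕ) :
    (n : ℂ) * AA g n = ∑ k ∈ Finset.Icc 1 n, SS g k * AA g (n - k) := by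
  have hL : (n : ℂ) * AA g n = ∑ d ∈ Finset.Icc 1 n, ∑ j ∈ Finset.Icc 1 n, ∑ P ∈ Irr d,
      if d * j ≤ n then (d : ℂ) * g P ^ j * AA g (n - d * j) else 0 := by
    calc (n : ℂ) * AA g n = ∑ f ∈ Mon n, (∑ d ∈ Finset.Icc 1 n, ∑ P ∈ Irr d,
        ∑ j ∈ Finset.Icc 1 n, if P ^ j ∣ f then (d : ℂ) else 0) * g f := by
          rw [AA, Finset.mul_sum]
          exact Finset.sum_congr rfl fun f hf => by rw [← degree_eq hf]
      _ = ∑ d ∈ Finset.Icc 1 n, ∑ P ∈ Irr d, ∑ j ∈ Finset.Icc 1 n, (d : ℂ) *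
          ∑ f ∈ Mon n, if P ^ j ∣ f then g f else 0 := by
          simp_rw [Finset.sum_mul, Finset.mul_sum]
          rw [Finset.sum_comm]
          refine Finset.sum_congr rfl fun d _ => ?_
          rw [Finset.sum_comm]
          refine Finset.sum_congr rfl fun P _ => ?_
          rw [Finset.sum_comm]
          refine Finset.sum_congr rfl fun j _ => ?_
          refine Finset.sum_congr rfl fun f _ => ?_
          split_ifs <;> simp
      _ = _ := by
          refine Finset.sum_congr rfl fun d _ => ?_
          rw [Finset.sum_comm]
          refine Finset.sum_congr rfl fun j _ => ?_
          refine Finset.sum_congr rfl fun P hP => ?_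
          rw [mem_Irr] at hP
          rw [sum_dvd hg (hP.1.1.pow j), natDegree_pow, hP.1.2, g_pow h1 hg hP.1.1, mul_comm j d]
          split_ifs
          · ring
          · simp
  rw [hL]
  have hS : ∀ k ∈ Finset.Icc 1 n, SS g k * AA g (n - k) = ∑ d ∈ Finset.Icc 1 n,
      ∑ j ∈ Finset.Icc 1 n, if d * j = k then
        ∑ P ∈ Irr d, (d : ℂ) * g P ^ j * AA g (n - d * j) else 0 := by
    intro k hk
    rw [Finset.mem_Icc] at hk
    rw [← Finset.sum_product', ← Finset.sum_filter, SS, Finset.sum_mul]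
    have : Finset.filter (fun x : ℕ × ℕ => x.1 * x.2 = k) (Finset.Icc 1 n ×ˢ Finset.Icc 1 n)
        = k.divisorsAntidiagonal := by
      ext ⟨d, j⟩
      simp only [Finset.mem_filter, Finset.mem_product, Finset.mem_Icc,
        Nat.mem_divisorsAntidiagonal]
      constructor
      · rintro ⟨_, h⟩; exact ⟨h, by omega⟩
      · rintro ⟨h, _⟩
        have hd : 0 < d := Nat.pos_of_ne_zero (by rintro rfl; omega)
        have hj : 0 < j := Nat.pos_of_ne_zero (by rintro rfl; omega)
        refine ⟨⟨⟨hd, by nlinarith⟩, ⟨hj, by nlinarith⟩⟩, h⟩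
    rw [this]
    refine Finset.sum_congr rfl fun p hp => ?_
    rw [Nat.mem_divisorsAntidiagonal] at hp
    rw [Finset.sum_mul, hp.1]
  symm
  rw [Finset.sum_congr rfl hS, Finset.sum_comm]
  refine Finset.sum_congr rfl fun d hd => ?_
  rw [Finset.sum_comm]
  refine Finset.sum_congr rfl fun j hj => ?_
  rw [Finset.mem_Icc] at hd hj
  rw [Finset.sum_ite_eq]
  have : 1 ≤ d * j := Nat.mul_pos hd.1 hj.1
  simp only [Finset.mem_Icc, this, true_and]
  split_ifs <;> simp

theorem SS_eq {g : F3[X] → ℂ} (h1 : g 1 = 1)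
    (hg : ∀ f h : F3[X], f.Monic → h.Monic → g (f * h) = g f * g h)
    (h3 : ∀ m, AA g (m + 3) = 0) {α β : ℂ} (hs : AA g 1 = -(α + β)) (hp : AA g 2 = α * β)
    (n : ℕ) : SS g (n + 1) = -(α ^ (n + 1) + β ^ (n + 1)) := by
  have h0 := AA_zero g h1
  induction n using Nat.strong_induction_on with
  | _ n ih =>
    match n with
    | 0 =>
      have := newton h1 hg 1
      simp [h0] at this
      rw [zero_add, ← this, hs]; ring
    | 1 =>
      have := newton h1 hg 2
      have i0 := ih 0 (by omega)
      rw [Finset.sum_Icc_succ_top (by omega)] at this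
      simp [h0] at this i0
      rw [i0, hs, hp] at this
      linear_combination -this
    | m + 2 =>
      have := newton h1 hg (m + 3)
      have i0 := ih m (by omega)
      have i1 := ih (m + 1) (by omega)
      rw [Finset.sum_Icc_succ_top (by omega), Finset.sum_Icc_succ_top (by omega),
        Finset.sum_Icc_succ_top (by omega), h3, Finset.sum_eq_zero] at this
      · rw [show m + 3 - (m + 1) = 2 by omega, show m + 3 - (m + 1 + 1) = 1 by omega,
          show m + 3 - (m + 2 + 1) = 0 by omega, i0, i1, h0, hs, hp] at this
        linear_combination -this
      · intro k hk
        rw [Finset.mem_Icc] at hk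
        rw [show m + 3 - k = (m - k) + 3 by omega, h3, mul_zero]


section field
variable {K : Type} [Field K] [Fintype K] [Algebra F3 K]

noncomputable def cp (n : ℕ) (a : K) : F3[X] := (minpoly F3 a) ^ (n / (minpoly F3 a).natDegree)

theorem mp_int (a : K) : IsIntegral F3 a := Algebra.IsIntegral.isIntegral a

theorem mp_dvd_iff (a : K) (m : ℕ) : (minpoly F3 a).natDegree ∣ m ↔ a ^ 3 ^ m = a := by
  rw [(minpoly.irreducible (mp_int a)).natDegree_dvd_iff_dvd_X_pow_card_pow_sub_X, minpoly.dvd_iff]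
  simp [sub_eq_zero]

theorem mp_deg_dvd {n : ℕ} (hK : Fintype.card K = 3 ^ n) (a : K) :
    (minpoly F3 a).natDegree ∣ n := by
  rw [mp_dvd_iff, ← hK, FiniteField.pow_card]

theorem mp_map (a : K) : (minpoly F3 a).map (algebraMap F3 K)
    = ∏ i ∈ Finset.range (minpoly F3 a).natDegree, (X - C (a ^ 3 ^ i)) := by
  have hcp : CharP K 3 := charP_of_injective_algebraMap (algebraMap F3 K).injective 3
  have hm := minpoly.monic (mp_int a)
  have hM : (∏ i ∈ Finset.range (minpoly F3 a).natDegree, (X - C (a ^ 3 ^ i))).Monic :=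
    monic_prod_of_monic (Finset.range (minpoly F3 a).natDegree) (fun i => X - C (a ^ 3 ^ i))
      fun i _ => monic_X_sub_C (a ^ 3 ^ i)
  have hne : ∀ i j : ℕ, i < j → j < (minpoly F3 a).natDegree → a ^ 3 ^ i ≠ a ^ 3 ^ j := by
    intro i j hij hj h
    have h2 : a ^ 3 ^ (j - i) = a := by
      apply iterateFrobenius_inj K 3 i
      rw [iterateFrobenius_def, iterateFrobenius_def, ← pow_mul, ← pow_add, h,
        show j - i + i = j by omega]
    rw [← mp_dvd_iff] at h2
    have := Nat.le_of_dvd (by omega) h2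
    omega
  have hdvd : (∏ i ∈ Finset.range (minpoly F3 a).natDegree, (X - C (a ^ 3 ^ i))) ∣
      (minpoly F3 a).map (algebraMap F3 K) := by
    apply Finset.prod_dvd_of_coprime
    · intro i hi j hj hij
      apply isCoprime_X_sub_C_of_isUnit_sub
      apply IsUnit.mk0
      rw [sub_ne_zero]
      simp only [Finset.coe_range, Set.mem_Iio] at hi hj
      rcases lt_or_gt_of_ne hij with h | h
      · exact hne i j h hj
      · exact (hne j i h hi).symm
    · intro i hi
      rw [dvd_iff_isRoot, IsRoot, eval_map_algebraMap]
      clear hM hne hi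
      induction i with
      | zero => simp
      | succ i ih =>
        rw [pow_succ, pow_mul, ← expand_aeval, ZMod.expand_card, map_pow, ih]
        simp
  refine eq_of_monic_of_dvd_of_natDegree_le hM (hm.map _) hdvd ?_
  rw [natDegree_map, natDegree_prod_of_monic _ _ fun i _ => monic_X_sub_C (a ^ 3 ^ i)]
  simp only [natDegree_X_sub_C]
  simp

theorem prod_period (a : K) (d j : ℕ) (h : a ^ 3 ^ d = a) :
    ∏ i ∈ Finset.range (d * j), (X - C (a ^ 3 ^ i)) =
      (∏ i ∈ Finset.range d, (X - C (a ^ 3 ^ i))) ^ j := by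
  have hk : ∀ j, a ^ 3 ^ (d * j) = a := by
    intro j
    induction j with
    | zero => simp
    | succ j ih => rw [mul_add, mul_one, pow_add, pow_mul, ih, h]
  induction j with
  | zero => simp
  | succ j ih =>
    rw [mul_add, mul_one, Finset.prod_range_add, ih, pow_succ]
    congr 1
    refine Finset.prod_congr rfl fun i _ => ?_
    rw [pow_add, pow_mul, hk]

theorem cp_map {n : ℕ} (hK : Fintype.card K = 3 ^ n) (a : K) :
    (cp n a).map (algebraMap F3 K) = ∏ i ∈ Finset.range n, (X - C (a ^ 3 ^ i)) := by
  obtain ⟨j, hj⟩ := mp_deg_dvd hK a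
  have hd : 0 < (minpoly F3 a).natDegree := minpoly.natDegree_pos (mp_int a)
  rw [cp, Polynomial.map_pow, mp_map, ← prod_period _ _ _ ((mp_dvd_iff a _).1 dvd_rfl),
    Nat.mul_div_cancel' ⟨j, hj⟩]

theorem cp_monic (n : ℕ) (a : K) : (cp n a).Monic := (minpoly.monic (mp_int a)).pow _

theorem cp_natDegree {n : ℕ} (hK : Fintype.card K = 3 ^ n) (a : K) : (cp n a).natDegree = n := by
  rw [cp, natDegree_pow, Nat.div_mul_cancel (mp_deg_dvd hK a)]

theorem rc_cp {n : ℕ} (hK : Fintype.card K = 3 ^ n) (a : K) (k : ℕ) (hk : k ≤ n) :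
    rc (cp n a) k = 0 ↔ traceFn 3 n k a = 0 := by
  rw [← (algebraMap F3 K).injective.eq_iff, map_zero, rc, coeff_reverse, cp_natDegree hK,
    revAt_le hk, ← coeff_map, cp_map hK]
  have h := Multiset.prod_X_sub_X_eq_sum_esymm ((Finset.range n).val.map (fun i => a ^ 3 ^ i))
  have h2 := Multiset.prod_X_sub_C_coeff ((Finset.range n).val.map (fun i => a ^ 3 ^ i))
    (k := n - k) (by simp)
  rw [Multiset.map_map, Finset.esymm_map_val] at h2
  have h3 : (Multiset.map ((fun t => X - C t) ∘ fun i => a ^ 3 ^ i) (Finset.range n).val).prod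
      = ∏ i ∈ Finset.range n, (X - C (a ^ 3 ^ i)) := rfl
  rw [h3] at h2
  rw [h2]
  simp only [Multiset.card_map, Finset.card_val, Finset.card_range, Nat.sub_sub_self hk, traceFn]
  simp

open Classical in
theorem card_fiber {n : ℕ} (hK : Fintype.card K = 3 ^ n) {d : ℕ} (hd : d ∣ n) {P : F3[X]}
    (hP : P ∈ Irr d) : (Finset.univ.filter (fun a : K => minpoly F3 a = P)).card = d := by
  rw [mem_Irr] at hP
  obtain ⟨⟨hm, rfl⟩, hi⟩ := hP
  have hspl : (P.map (algebraMap F3 K)).Splits := by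
    rw [hi.natDegree_dvd_iff_dvd_X_pow_card_pow_sub_X] at hd
    have h := Polynomial.map_dvd (algebraMap F3 K) hd
    have hs := FiniteField.splits_X_pow_card_sub_X (K := K) 3
    rw [hK] at hs
    rw [Nat.card_zmod] at h
    refine hs.of_dvd ?_ h
    refine (Polynomial.map_ne_zero_iff (algebraMap F3 K).injective).2 ?_
    intro h0
    have hn0 : n ≠ 0 := by
      rintro rfl
      have := Fintype.one_lt_card (α := K)
      omega
    exact FiniteField.X_pow_card_pow_sub_X_ne_zero F3 hn0 (by norm_num) h0
  have hsep : P.Separable := PerfectField.separable_of_irreducible hi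
  rw [← Polynomial.card_rootSet_eq_natDegree hsep hspl, ← Set.toFinset_card]
  congr 1
  ext a
  simp only [Finset.mem_filter, Finset.mem_univ, true_and, Set.mem_toFinset, mem_rootSet]
  constructor
  · rintro rfl
    exact ⟨hi.ne_zero, minpoly.aeval _ _⟩
  · rintro ⟨_, h⟩
    exact (minpoly.eq_of_irreducible_of_monic hi h hm).symm

open Classical in
theorem sum_cp {n : ℕ} (hn : n ≠ 0) (hK : Fintype.card K = 3 ^ n) {g : F3[X] → ℂ} (h1 : g 1 = 1)
    (hg : ∀ f h : F3[X], f.Monic → h.Monic → g (f * h) = g f * g h) :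
    ∑ a : K, g (cp n a) = SS g n := by
  rw [SS, Nat.sum_divisorsAntidiagonal (fun d j => ∑ P ∈ Irr d, (d : ℂ) * g P ^ j)]
  have h2 : ∀ d ∈ n.divisors, ∑ P ∈ Irr d, (d : ℂ) * g P ^ (n / d)
      = ∑ P ∈ Irr d, ∑ a ∈ Finset.univ.filter (fun a : K => minpoly F3 a = P), g (cp n a) := by
    intro d hd
    have hd' := Nat.dvd_of_mem_divisors hd
    refine Finset.sum_congr rfl fun P hP => ?_
    rw [Finset.sum_congr rfl (g := fun _ => g P ^ (n / d)), Finset.sum_const,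
      card_fiber hK hd' hP, nsmul_eq_mul]
    intro a ha
    rw [Finset.mem_filter] at ha
    rw [mem_Irr] at hP
    rw [cp, ha.2, g_pow h1 hg hP.1.1, hP.1.2]
  rw [Finset.sum_congr rfl h2, ← Finset.sum_biUnion]
  · rw [Finset.sum_fiberwise_of_maps_to]
    intro a _
    rw [Finset.mem_biUnion]
    exact ⟨(minpoly F3 a).natDegree, Nat.mem_divisors.2 ⟨mp_deg_dvd hK a, hn⟩,
      mem_Irr.2 ⟨⟨minpoly.monic (mp_int a), rfl⟩, minpoly.irreducible (mp_int a)⟩⟩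
  · intro a _ b _ hab
    simp only [Function.onFun]
    rw [Finset.disjoint_left]
    intro P ha hb
    rw [mem_Irr] at ha hb
    exact hab (ha.1.2.symm.trans hb.1.2)
end field

theorem e_ne_one (e : AddChar (ZMod 9) ℂ) (he : e 3 ≠ 1) {s : ZMod 9} (hs : s ≠ 0) : e s ≠ 1 := by
  have h : ∀ s : ZMod 9, s ≠ 0 → ∃ k : Fin 9, (k : ℕ) • s = 3 := by decide
  obtain ⟨k, hk⟩ := h s hs
  intro h1
  apply he
  rw [← hk, AddChar.map_nsmul_eq_pow, h1, one_pow]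

theorem geom_zero {w : ℂ} {m : ℕ} (hw : w ≠ 1) (hm : w ^ m = 1) : ∑ i : Fin m, w ^ (i : ℕ) = 0 := by
  rw [Fin.sum_univ_eq_sum_range (fun i => w ^ i), geom_sum_eq hw, hm]
  simp

theorem sum9 (e : AddChar (ZMod 9) ℂ) (he : e 3 ≠ 1) {s : ZMod 9} (hs : s ≠ 0) :
    ∑ i : Fin 9, e s ^ (i : ℕ) = 0 := by
  refine geom_zero (e_ne_one e he hs) ?_
  rw [← AddChar.map_nsmul_eq_pow, show 9 • s = 0 by revert s; decide, AddChar.map_zero_eq_one]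

theorem sum3 (e : AddChar (ZMod 9) ℂ) (he : e 3 ≠ 1) {s : ZMod 9} (hs : s ≠ 0) (h3 : 3 • s = 0) :
    ∑ i : Fin 3, e s ^ (i : ℕ) = 0 := by
  refine geom_zero (e_ne_one e he hs) ?_
  rw [← AddChar.map_nsmul_eq_pow, h3, AddChar.map_zero_eq_one]

theorem logB_three : ∀ x y : F3, 3 • logB x y = 0 := by decide

theorem orth_zero (e : AddChar (ZMod 9) ℂ) (he : e 3 ≠ 1) (x y z : F3)
    (h : ¬ (x = 0 ∧ y = 0 ∧ z = 0)) :
    ∑ i : Fin 9, ∑ j : Fin 3, chv e (i : ℕ) (j : ℕ) x y z = 0 := by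
  have h1 : ∑ i : Fin 9, ∑ j : Fin 3, chv e (i : ℕ) (j : ℕ) x y z =
      (∑ i : Fin 9, e (logA x y z) ^ (i : ℕ)) * ∑ j : Fin 3, e (logB x y) ^ (j : ℕ) := by
    rw [Finset.sum_mul_sum]
    refine Finset.sum_congr rfl fun i _ => Finset.sum_congr rfl fun j _ => ?_
    rw [chv, AddChar.map_add_eq_mul, ← nsmul_eq_mul, ← nsmul_eq_mul,
      AddChar.map_nsmul_eq_pow, AddChar.map_nsmul_eq_pow]
  rw [← log_eq_zero, not_and_or] at h
  rw [h1]
  rcases h with h | h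
  · rw [sum9 e he h, zero_mul]
  · rw [sum3 e he h (logB_three x y), mul_zero]

theorem chv_sum_zero (e : AddChar (ZMod 9) ℂ) (he : e 3 ≠ 1) (i : Fin 9) (j : Fin 3)
    (hij : i ≠ 0 ∨ j ≠ 0) :
    ∑ x : F3, ∑ y : F3, ∑ z : F3, chv e (i : ℕ) (j : ℕ) x y z = 0 := by
  have h1 : ∑ x : F3, ∑ y : F3, ∑ z : F3, chv e (i : ℕ) (j : ℕ) x y z
      = (∑ x : F3, ∑ z : F3, e ((i : ℕ) : ZMod 9) ^ (x.val + 3 * z.val))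
        * ∑ y : F3, e (3 * ((j : ℕ) : ZMod 9)) ^ y.val := by
    rw [Finset.sum_mul]
    refine Finset.sum_congr rfl fun x _ => ?_
    rw [← Equiv.sum_comp (Equiv.addRight (x - x * x)), Finset.mul_sum]
    refine Finset.sum_congr rfl fun y _ => ?_
    rw [← Equiv.sum_comp (Equiv.addRight (x * y)), Finset.sum_mul]
    refine Finset.sum_congr rfl fun z _ => ?_
    rw [← AddChar.map_nsmul_eq_pow, ← AddChar.map_nsmul_eq_pow, ← AddChar.map_add_eq_mul, chv,
      logA, logB]
    simp only [Equiv.coe_addRight]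
    rw [show y + (x - x * x) - x + x * x = y by ring, show z + x * y - x * y = z by ring]
    congr 1
    simp only [nsmul_eq_mul]
    push_cast
    ring
  have h3 : ∀ g : F3 → ℂ, ∑ x, g x = g 0 + g 1 + g 2 := fun g => Fin.sum_univ_three g
  have v0 : (0 : F3).val = 0 := rfl
  have v1 : (1 : F3).val = 1 := rfl
  have v2 : (2 : F3).val = 2 := rfl
  rw [h1]
  by_cases hi : i = 0
  · have hj := hij.resolve_left (not_not.2 hi)
    have hs : ∀ j : Fin 3, j ≠ 0 → (3 * ((j : ℕ) : ZMod 9)) ≠ 0 ∧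
      3 • (3 * ((j : ℕ) : ZMod 9)) = 0 := by decide
    have := sum3 e he (hs j hj).1 (hs j hj).2
    rw [Fin.sum_univ_three] at this
    simp only [h3, v0, v1, v2]
    have h' : e (3 * ((j : ℕ) : ZMod 9)) ^ 0 + e (3 * ((j : ℕ) : ZMod 9)) ^ 1
      + e (3 * ((j : ℕ) : ZMod 9)) ^ 2 = 0 := this
    rw [h', mul_zero]
  · have hs : ∀ i : Fin 9, i ≠ 0 → ((i : ℕ) : ZMod 9) ≠ 0 := by decide
    have := sum9 e he (hs i hi)
    rw [Fin.sum_univ_eq_sum_range (fun k => e ((i : ℕ) : ZMod 9) ^ k)] at this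
    simp only [Finset.sum_range_succ, Finset.sum_range_zero] at this
    simp only [h3, v0, v1, v2]
    refine mul_eq_zero_of_left ?_ _
    linear_combination this

theorem AA3_zero (e : AddChar (ZMod 9) ℂ) (he : e 3 ≠ 1) (i : Fin 9) (j : Fin 3)
    (hij : i ≠ 0 ∨ j ≠ 0) (m : ℕ) : AA (ch e (i : ℕ) (j : ℕ)) (m + 3) = 0 := by
  rw [AA_three, chv_sum_zero e he i j hij, mul_zero]

theorem orth (e : AddChar (ZMod 9) ℂ) (he : e 3 ≠ 1) (x y z : F3) :
    ∑ i : Fin 9, ∑ j : Fin 3, chv e (i : ℕ) (j : ℕ) x y z =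
      if x = 0 ∧ y = 0 ∧ z = 0 then 27 else 0 := by
  split_ifs with h
  · obtain ⟨rfl, rfl, rfl⟩ := h
    simp [chv, show logA 0 0 0 = 0 by decide, show logB 0 0 = 0 by decide]
    norm_num
  · exact orth_zero e he x y z h

noncomputable def A1 (z : ℂ) (i j : ℕ) : ℂ := 1 + z ^ i + z ^ (8 * i + 6 * j)
noncomputable def A2 (z : ℂ) (i j : ℕ) : ℂ :=
  (1 + z ^ (3 * j) + z ^ (6 * j)) + (z ^ i + z ^ (7 * i + 3 * j) + z ^ (4 * i + 6 * j))
    + (z ^ (8 * i + 6 * j) + z ^ (2 * i) + z ^ (5 * i + 3 * j))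

theorem chv_pow (e : AddChar (ZMod 9) ℂ) {ζ : ℂ} (he : ∀ k : ℕ, e (k : ZMod 9) = ζ ^ k)
    (i j a b : ℕ) (x y z : F3) (ha : logA x y z = (a : ZMod 9)) (hb : logB x y = (b : ZMod 9)) :
    chv e i j x y z = ζ ^ (a * i + b * j) := by
  rw [← he, chv, ha, hb]
  push_cast
  congr 1; ring

theorem AA1_eq (e : AddChar (ZMod 9) ℂ) {ζ : ℂ} (he : ∀ k : ℕ, e (k : ZMod 9) = ζ ^ k)
    (i j : ℕ) : AA (ch e i j) 1 = A1 ζ i j := by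
  rw [AA_one, A1]
  have : ∀ g : F3 → ℂ, ∑ x, g x = g 0 + g 1 + g 2 := fun g => Fin.sum_univ_three g
  rw [this, chv_pow e he i j 0 0 _ _ _ (by decide) (by decide),
    chv_pow e he i j 1 0 _ _ _ (by decide) (by decide),
    chv_pow e he i j 8 6 _ _ _ (by decide) (by decide)]
  simp

theorem AA2_eq (e : AddChar (ZMod 9) ℂ) {ζ : ℂ} (he : ∀ k : ℕ, e (k : ZMod 9) = ζ ^ k)
    (i j : ℕ) : AA (ch e i j) 2 = A2 ζ i j := by
  rw [AA_two, A2]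
  have : ∀ g : F3 → ℂ, ∑ x, g x = g 0 + g 1 + g 2 := fun g => Fin.sum_univ_three g
  simp only [this]
  rw [chv_pow e he i j 0 0 0 0 0 (by decide) (by decide),
    chv_pow e he i j 0 3 0 1 0 (by decide) (by decide),
    chv_pow e he i j 0 6 0 2 0 (by decide) (by decide),
    chv_pow e he i j 1 0 1 0 0 (by decide) (by decide),
    chv_pow e he i j 7 3 1 1 0 (by decide) (by decide),
    chv_pow e he i j 4 6 1 2 0 (by decide) (by decide),
    chv_pow e he i j 8 6 2 0 0 (by decide) (by decide),
    chv_pow e he i j 2 0 2 1 0 (by decide) (by decide),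
    chv_pow e he i j 5 3 2 2 0 (by decide) (by decide)]
  simp

noncomputable def rr (n : ℕ) (p : ℂ[X]) : ℂ := (p.roots.map (· ^ n)).sum

noncomputable def QQ (c d : ℂ) : ℂ[X] := X ^ 2 + C c * X + C d

theorem QQ_ne (c d : ℂ) : QQ c d ≠ 0 := by
  intro h
  have := congrArg (fun p => coeff p 2) h
  simp [QQ] at this

theorem rr_mul (n : ℕ) {p q : ℂ[X]} (hp : p ≠ 0) (hq : q ≠ 0) :
    rr n (p * q) = rr n p + rr n q := by
  rw [rr, roots_mul (mul_ne_zero hp hq), Multiset.map_add, Multiset.sum_add]; rfl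

theorem rr_X {n : ℕ} (hn : n ≠ 0) : rr n X = 0 := by
  simp [rr, hn]

theorem SS_rr {g : F3[X] → ℂ} (h1 : g 1 = 1)
    (hg : ∀ f h : F3[X], f.Monic → h.Monic → g (f * h) = g f * g h)
    (h3 : ∀ m, AA g (m + 3) = 0) (n : ℕ) (hn : n ≠ 0) :
    SS g n = - rr n (QQ (AA g 1) (AA g 2)) := by
  obtain ⟨m, rfl⟩ := Nat.exists_eq_succ_of_ne_zero hn
  set c := AA g 1 with hc
  set d := AA g 2 with hd
  obtain ⟨α, hα⟩ := IsAlgClosed.exists_root (QQ c d) (by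
    have : (QQ c d).degree = 2 := by
      have := degree_quadratic (a := (1 : ℂ)) (b := c) (c := d) one_ne_zero
      simpa [QQ] using this
    rw [this]; norm_num)
  have hα' : α ^ 2 + c * α + d = 0 := by simpa [QQ] using hα
  have hf : QQ c d = (X - C α) * (X - C (-c - α)) := by
    have : d = α * (-c - α) := by linear_combination hα'
    rw [QQ, this]
    simp only [C_sub, C_neg, C_mul]
    ring
  rw [SS_eq h1 hg h3 (α := α) (β := -c - α) (by rw [← hc]; ring)
    (by rw [← hd]; linear_combination hα'), hf,
    rr_mul _ (X_sub_C_ne_zero _) (X_sub_C_ne_zero _)]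
  unfold rr
  rw [roots_X_sub_C, roots_X_sub_C]
  simp

theorem A1_0_1 {z : ℂ} (hz : z ^ 6 + z ^ 3 + 1 = 0) :
    A1 z 0 1 = (1) + (-1) * z ^ 3 := by
  unfold A1
  linear_combination ((1)) * hz

theorem A1_0_2 {z : ℂ} (hz : z ^ 6 + z ^ 3 + 1 = 0) :
    A1 z 0 2 = (2) + (1) * z ^ 3 := by
  unfold A1
  linear_combination ((-1) * z ^ 3 + (1) * z ^ 6) * hz

theorem A1_1_0 {z : ℂ} (hz : z ^ 6 + z ^ 3 + 1 = 0) :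
    A1 z 1 0 = (1) + (1) * z ^ 1 + (-1) * z ^ 2 + (-1) * z ^ 5 := by
  unfold A1
  linear_combination ((1) * z ^ 2) * hz

theorem A1_1_1 {z : ℂ} (hz : z ^ 6 + z ^ 3 + 1 = 0) :
    A1 z 1 1 = (1) + (1) * z ^ 1 + (1) * z ^ 5 := by
  unfold A1
  linear_combination ((-1) * z ^ 5 + (1) * z ^ 8) * hz

theorem A1_1_2 {z : ℂ} (hz : z ^ 6 + z ^ 3 + 1 = 0) :
    A1 z 1 2 = (1) + (1) * z ^ 1 + (1) * z ^ 2 := by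
  unfold A1
  linear_combination ((-1) * z ^ 2 + (1) * z ^ 5 + (-1) * z ^ 11 + (1) * z ^ 14) * hz

theorem A1_2_0 {z : ℂ} (hz : z ^ 6 + z ^ 3 + 1 = 0) :
    A1 z 2 0 = (1) + (-1) * z ^ 1 + (1) * z ^ 2 + (-1) * z ^ 4 := by
  unfold A1
  linear_combination ((1) * z ^ 1 + (-1) * z ^ 7 + (1) * z ^ 10) * hz

theorem A1_2_1 {z : ℂ} (hz : z ^ 6 + z ^ 3 + 1 = 0) :
    A1 z 2 1 = (1) + (1) * z ^ 2 + (1) * z ^ 4 := by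
  unfold A1
  linear_combination ((-1) * z ^ 4 + (1) * z ^ 7 + (-1) * z ^ 13 + (1) * z ^ 16) * hz

theorem A1_2_2 {z : ℂ} (hz : z ^ 6 + z ^ 3 + 1 = 0) :
    A1 z 2 2 = (1) + (1) * z ^ 1 + (1) * z ^ 2 := by
  unfold A1
  linear_combination ((-1) * z ^ 1 + (1) * z ^ 4 + (-1) * z ^ 10 + (1) * z ^ 13 + (-1) * z ^ 19 + (1) * z ^ 22) * hz

theorem A1_3_0 {z : ℂ} (hz : z ^ 6 + z ^ 3 + 1 = 0) :
    A1 z 3 0 = 0 := by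
  unfold A1
  linear_combination ((1) + (-1) * z ^ 6 + (1) * z ^ 9 + (-1) * z ^ 15 + (1) * z ^ 18) * hz

theorem A1_3_1 {z : ℂ} (hz : z ^ 6 + z ^ 3 + 1 = 0) :
    A1 z 3 1 = (1) + (2) * z ^ 3 := by
  unfold A1
  linear_combination ((-1) * z ^ 3 + (1) * z ^ 6 + (-1) * z ^ 12 + (1) * z ^ 15 + (-1) * z ^ 21 + (1) * z ^ 24) * hz

theorem A1_3_2 {z : ℂ} (hz : z ^ 6 + z ^ 3 + 1 = 0) :
    A1 z 3 2 = (2) + (1) * z ^ 3 := by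
  unfold A1
  linear_combination ((-1) + (1) * z ^ 3 + (-1) * z ^ 9 + (1) * z ^ 12 + (-1) * z ^ 18 + (1) * z ^ 21 + (-1) * z ^ 27 + (1) * z ^ 30) * hz

theorem A1_4_0 {z : ℂ} (hz : z ^ 6 + z ^ 3 + 1 = 0) :
    A1 z 4 0 = (1) + (1) * z ^ 4 + (1) * z ^ 5 := by
  unfold A1
  linear_combination ((-1) * z ^ 5 + (1) * z ^ 8 + (-1) * z ^ 14 + (1) * z ^ 17 + (-1) * z ^ 23 + (1) * z ^ 26) * hz

theorem A1_4_1 {z : ℂ} (hz : z ^ 6 + z ^ 3 + 1 = 0) :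
    A1 z 4 1 = (1) + (1) * z ^ 2 + (1) * z ^ 4 := by
  unfold A1
  linear_combination ((-1) * z ^ 2 + (1) * z ^ 5 + (-1) * z ^ 11 + (1) * z ^ 14 + (-1) * z ^ 20 + (1) * z ^ 23 + (-1) * z ^ 29 + (1) * z ^ 32) * hz

theorem A1_4_2 {z : ℂ} (hz : z ^ 6 + z ^ 3 + 1 = 0) :
    A1 z 4 2 = (1) + (-1) * z ^ 2 + (1) * z ^ 4 + (-1) * z ^ 5 := by
  unfold A1
  linear_combination ((1) * z ^ 2 + (-1) * z ^ 8 + (1) * z ^ 11 + (-1) * z ^ 17 + (1) * z ^ 20 + (-1) * z ^ 26 + (1) * z ^ 29 + (-1) * z ^ 35 + (1) * z ^ 38) * hz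

theorem A1_5_0 {z : ℂ} (hz : z ^ 6 + z ^ 3 + 1 = 0) :
    A1 z 5 0 = (1) + (1) * z ^ 4 + (1) * z ^ 5 := by
  unfold A1
  linear_combination ((-1) * z ^ 4 + (1) * z ^ 7 + (-1) * z ^ 13 + (1) * z ^ 16 + (-1) * z ^ 22 + (1) * z ^ 25 + (-1) * z ^ 31 + (1) * z ^ 34) * hz

theorem A1_5_1 {z : ℂ} (hz : z ^ 6 + z ^ 3 + 1 = 0) :
    A1 z 5 1 = (1) + (1) * z ^ 1 + (1) * z ^ 5 := by
  unfold A1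
  linear_combination ((-1) * z ^ 1 + (1) * z ^ 4 + (-1) * z ^ 10 + (1) * z ^ 13 + (-1) * z ^ 19 + (1) * z ^ 22 + (-1) * z ^ 28 + (1) * z ^ 31 + (-1) * z ^ 37 + (1) * z ^ 40) * hz

theorem A1_5_2 {z : ℂ} (hz : z ^ 6 + z ^ 3 + 1 = 0) :
    A1 z 5 2 = (1) + (-1) * z ^ 1 + (-1) * z ^ 4 + (1) * z ^ 5 := by
  unfold A1
  linear_combination ((1) * z ^ 1 + (-1) * z ^ 7 + (1) * z ^ 10 + (-1) * z ^ 16 + (1) * z ^ 19 + (-1) * z ^ 25 + (1) * z ^ 28 + (-1) * z ^ 34 + (1) * z ^ 37 + (-1) * z ^ 43 + (1) * z ^ 46) * hz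

theorem A1_6_0 {z : ℂ} (hz : z ^ 6 + z ^ 3 + 1 = 0) :
    A1 z 6 0 = 0 := by
  unfold A1
  linear_combination ((1) + (-1) * z ^ 3 + (1) * z ^ 6 + (-1) * z ^ 12 + (1) * z ^ 15 + (-1) * z ^ 21 + (1) * z ^ 24 + (-1) * z ^ 30 + (1) * z ^ 33 + (-1) * z ^ 39 + (1) * z ^ 42) * hz

theorem A1_6_1 {z : ℂ} (hz : z ^ 6 + z ^ 3 + 1 = 0) :
    A1 z 6 1 = (1) + (-1) * z ^ 3 := by
  unfold A1
  linear_combination ((1) * z ^ 3 + (-1) * z ^ 9 + (1) * z ^ 12 + (-1) * z ^ 18 + (1) * z ^ 21 + (-1) * z ^ 27 + (1) * z ^ 30 + (-1) * z ^ 36 + (1) * z ^ 39 + (-1) * z ^ 45 + (1) * z ^ 48) * hz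

theorem A1_6_2 {z : ℂ} (hz : z ^ 6 + z ^ 3 + 1 = 0) :
    A1 z 6 2 = (-1) + (-2) * z ^ 3 := by
  unfold A1
  linear_combination ((2) + (-1) * z ^ 6 + (1) * z ^ 9 + (-1) * z ^ 15 + (1) * z ^ 18 + (-1) * z ^ 24 + (1) * z ^ 27 + (-1) * z ^ 33 + (1) * z ^ 36 + (-1) * z ^ 42 + (1) * z ^ 45 + (-1) * z ^ 51 + (1) * z ^ 54) * hz

theorem A1_7_0 {z : ℂ} (hz : z ^ 6 + z ^ 3 + 1 = 0) :
    A1 z 7 0 = (1) + (-1) * z ^ 1 + (1) * z ^ 2 + (-1) * z ^ 4 := by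
  unfold A1
  linear_combination ((1) * z ^ 1 + (-1) * z ^ 2 + (1) * z ^ 5 + (-1) * z ^ 11 + (1) * z ^ 14 + (-1) * z ^ 20 + (1) * z ^ 23 + (-1) * z ^ 29 + (1) * z ^ 32 + (-1) * z ^ 38 + (1) * z ^ 41 + (-1) * z ^ 47 + (1) * z ^ 50) * hz

theorem A1_7_1 {z : ℂ} (hz : z ^ 6 + z ^ 3 + 1 = 0) :
    A1 z 7 1 = (1) + (-1) * z ^ 1 + (-1) * z ^ 2 + (-1) * z ^ 4 + (-1) * z ^ 5 := by
  unfold A1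
  linear_combination ((1) * z ^ 1 + (1) * z ^ 2 + (-1) * z ^ 8 + (1) * z ^ 11 + (-1) * z ^ 17 + (1) * z ^ 20 + (-1) * z ^ 26 + (1) * z ^ 29 + (-1) * z ^ 35 + (1) * z ^ 38 + (-1) * z ^ 44 + (1) * z ^ 47 + (-1) * z ^ 53 + (1) * z ^ 56) * hz

theorem A1_7_2 {z : ℂ} (hz : z ^ 6 + z ^ 3 + 1 = 0) :
    A1 z 7 2 = (1) + (-1) * z ^ 1 + (-1) * z ^ 4 + (1) * z ^ 5 := by
  unfold A1
  linear_combination ((1) * z ^ 1 + (-1) * z ^ 5 + (1) * z ^ 8 + (-1) * z ^ 14 + (1) * z ^ 17 + (-1) * z ^ 23 + (1) * z ^ 26 + (-1) * z ^ 32 + (1) * z ^ 35 + (-1) * z ^ 41 + (1) * z ^ 44 + (-1) * z ^ 50 + (1) * z ^ 53 + (-1) * z ^ 59 + (1) * z ^ 62) * hz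

theorem A1_8_0 {z : ℂ} (hz : z ^ 6 + z ^ 3 + 1 = 0) :
    A1 z 8 0 = (1) + (1) * z ^ 1 + (-1) * z ^ 2 + (-1) * z ^ 5 := by
  unfold A1
  linear_combination ((-1) * z ^ 1 + (1) * z ^ 2 + (1) * z ^ 4 + (-1) * z ^ 10 + (1) * z ^ 13 + (-1) * z ^ 19 + (1) * z ^ 22 + (-1) * z ^ 28 + (1) * z ^ 31 + (-1) * z ^ 37 + (1) * z ^ 40 + (-1) * z ^ 46 + (1) * z ^ 49 + (-1) * z ^ 55 + (1) * z ^ 58) * hz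

theorem A1_8_1 {z : ℂ} (hz : z ^ 6 + z ^ 3 + 1 = 0) :
    A1 z 8 1 = (1) + (-1) * z ^ 1 + (-1) * z ^ 2 + (-1) * z ^ 4 + (-1) * z ^ 5 := by
  unfold A1
  linear_combination ((1) * z ^ 1 + (1) * z ^ 2 + (-1) * z ^ 7 + (1) * z ^ 10 + (-1) * z ^ 16 + (1) * z ^ 19 + (-1) * z ^ 25 + (1) * z ^ 28 + (-1) * z ^ 34 + (1) * z ^ 37 + (-1) * z ^ 43 + (1) * z ^ 46 + (-1) * z ^ 52 + (1) * z ^ 55 + (-1) * z ^ 61 + (1) * z ^ 64) * hz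

theorem A1_8_2 {z : ℂ} (hz : z ^ 6 + z ^ 3 + 1 = 0) :
    A1 z 8 2 = (1) + (-1) * z ^ 2 + (1) * z ^ 4 + (-1) * z ^ 5 := by
  unfold A1
  linear_combination ((1) * z ^ 2 + (-1) * z ^ 4 + (1) * z ^ 7 + (-1) * z ^ 13 + (1) * z ^ 16 + (-1) * z ^ 22 + (1) * z ^ 25 + (-1) * z ^ 31 + (1) * z ^ 34 + (-1) * z ^ 40 + (1) * z ^ 43 + (-1) * z ^ 49 + (1) * z ^ 52 + (-1) * z ^ 58 + (1) * z ^ 61 + (-1) * z ^ 67 + (1) * z ^ 70) * hz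

theorem A2_0_1 {z : ℂ} (hz : z ^ 6 + z ^ 3 + 1 = 0) :
    A2 z 0 1 = 0 := by
  unfold A2
  linear_combination ((3)) * hz

theorem A2_0_2 {z : ℂ} (hz : z ^ 6 + z ^ 3 + 1 = 0) :
    A2 z 0 2 = 0 := by
  unfold A2
  linear_combination ((3) + (-3) * z ^ 3 + (3) * z ^ 6) * hz

theorem A2_1_0 {z : ℂ} (hz : z ^ 6 + z ^ 3 + 1 = 0) :
    A2 z 1 0 = (3) := by
  unfold A2
  linear_combination ((1) * z ^ 1 + (1) * z ^ 2) * hz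

theorem A2_1_1 {z : ℂ} (hz : z ^ 6 + z ^ 3 + 1 = 0) :
    A2 z 1 1 = (3) * z ^ 1 := by
  unfold A2
  linear_combination ((1) + (-2) * z ^ 1 + (1) * z ^ 2 + (2) * z ^ 4 + (-1) * z ^ 5 + (1) * z ^ 8) * hz

theorem A2_1_2 {z : ℂ} (hz : z ^ 6 + z ^ 3 + 1 = 0) :
    A2 z 1 2 = (3) * z ^ 2 := by
  unfold A2
  linear_combination ((1) + (1) * z ^ 1 + (-2) * z ^ 2 + (-1) * z ^ 3 + (-1) * z ^ 4 + (2) * z ^ 5 + (1) * z ^ 6 + (1) * z ^ 10 + (-1) * z ^ 11 + (1) * z ^ 14) * hz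

theorem A2_2_0 {z : ℂ} (hz : z ^ 6 + z ^ 3 + 1 = 0) :
    A2 z 2 0 = (3) := by
  unfold A2
  linear_combination ((1) * z ^ 2 + (1) * z ^ 4 + (-1) * z ^ 5 + (-1) * z ^ 7 + (1) * z ^ 8 + (1) * z ^ 10) * hz

theorem A2_2_1 {z : ℂ} (hz : z ^ 6 + z ^ 3 + 1 = 0) :
    A2 z 2 1 = (3) * z ^ 4 := by
  unfold A2
  linear_combination ((1) + (1) * z ^ 2 + (-2) * z ^ 4 + (-1) * z ^ 5 + (2) * z ^ 7 + (1) * z ^ 11 + (-1) * z ^ 13 + (1) * z ^ 16) * hz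

theorem A2_2_2 {z : ℂ} (hz : z ^ 6 + z ^ 3 + 1 = 0) :
    A2 z 2 2 = (3) * z ^ 2 := by
  unfold A2
  linear_combination ((1) + (-2) * z ^ 2 + (-1) * z ^ 3 + (1) * z ^ 4 + (2) * z ^ 5 + (1) * z ^ 6 + (-1) * z ^ 7 + (-2) * z ^ 11 + (1) * z ^ 13 + (2) * z ^ 14 + (-1) * z ^ 19 + (1) * z ^ 22) * hz

theorem A2_3_0 {z : ℂ} (hz : z ^ 6 + z ^ 3 + 1 = 0) :
    A2 z 3 0 = 0 := by
  unfold A2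
  linear_combination ((3) + (-2) * z ^ 3 + (2) * z ^ 9 + (-1) * z ^ 12 + (1) * z ^ 18) * hz

theorem A2_3_1 {z : ℂ} (hz : z ^ 6 + z ^ 3 + 1 = 0) :
    A2 z 3 1 = 0 := by
  unfold A2
  linear_combination ((1) + (1) * z ^ 3 + (-1) * z ^ 9 + (1) * z ^ 12 + (1) * z ^ 18 + (-1) * z ^ 21 + (1) * z ^ 24) * hz

theorem A2_3_2 {z : ℂ} (hz : z ^ 6 + z ^ 3 + 1 = 0) :
    A2 z 3 2 = 0 := by
  unfold A2
  linear_combination ((1) + (1) * z ^ 6 + (-1) * z ^ 9 + (1) * z ^ 12 + (-1) * z ^ 18 + (2) * z ^ 21 + (-1) * z ^ 27 + (1) * z ^ 30) * hz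

theorem A2_4_0 {z : ℂ} (hz : z ^ 6 + z ^ 3 + 1 = 0) :
    A2 z 4 0 = (3) := by
  unfold A2
  linear_combination ((1) * z ^ 4 + (-1) * z ^ 7 + (1) * z ^ 8 + (-1) * z ^ 11 + (1) * z ^ 13 + (1) * z ^ 17 + (-1) * z ^ 19 + (1) * z ^ 22 + (-1) * z ^ 23 + (1) * z ^ 26) * hz

theorem A2_4_1 {z : ℂ} (hz : z ^ 6 + z ^ 3 + 1 = 0) :
    A2 z 4 1 = (3) * z ^ 4 := by
  unfold A2
  linear_combination ((1) + (-2) * z ^ 4 + (2) * z ^ 7 + (1) * z ^ 8 + (-1) * z ^ 11 + (-2) * z ^ 13 + (2) * z ^ 16 + (1) * z ^ 17 + (-1) * z ^ 20 + (-1) * z ^ 22 + (1) * z ^ 23 + (1) * z ^ 25 + (-1) * z ^ 29 + (1) * z ^ 32) * hz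

theorem A2_4_2 {z : ℂ} (hz : z ^ 6 + z ^ 3 + 1 = 0) :
    A2 z 4 2 = (-3) * z ^ 2 + (-3) * z ^ 5 := by
  unfold A2
  linear_combination ((1) + (3) * z ^ 2 + (-1) * z ^ 3 + (1) * z ^ 4 + (1) * z ^ 6 + (-1) * z ^ 7 + (-2) * z ^ 8 + (2) * z ^ 11 + (1) * z ^ 13 + (-1) * z ^ 16 + (-2) * z ^ 17 + (2) * z ^ 20 + (1) * z ^ 22 + (-1) * z ^ 25 + (-1) * z ^ 26 + (1) * z ^ 28 + (1) * z ^ 29 + (-1) * z ^ 35 + (1) * z ^ 38) * hz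

theorem A2_5_0 {z : ℂ} (hz : z ^ 6 + z ^ 3 + 1 = 0) :
    A2 z 5 0 = (3) := by
  unfold A2
  linear_combination ((1) * z ^ 5 + (-1) * z ^ 8 + (1) * z ^ 10 + (-1) * z ^ 13 + (1) * z ^ 14 + (-1) * z ^ 17 + (1) * z ^ 19 + (1) * z ^ 20 + (-1) * z ^ 22 + (1) * z ^ 25 + (-1) * z ^ 26 + (1) * z ^ 29 + (-1) * z ^ 31 + (1) * z ^ 34) * hz

theorem A2_5_1 {z : ℂ} (hz : z ^ 6 + z ^ 3 + 1 = 0) :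
    A2 z 5 1 = (3) * z ^ 1 := by
  unfold A2
  linear_combination ((1) + (-3) * z ^ 1 + (3) * z ^ 4 + (1) * z ^ 5 + (-1) * z ^ 8 + (-2) * z ^ 10 + (2) * z ^ 13 + (1) * z ^ 14 + (-1) * z ^ 17 + (-2) * z ^ 19 + (2) * z ^ 22 + (1) * z ^ 23 + (-1) * z ^ 28 + (-1) * z ^ 29 + (1) * z ^ 31 + (1) * z ^ 32 + (-1) * z ^ 37 + (1) * z ^ 40) * hz

theorem A2_5_2 {z : ℂ} (hz : z ^ 6 + z ^ 3 + 1 = 0) :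
    A2 z 5 2 = (3) * z ^ 5 := by
  unfold A2
  linear_combination ((1) + (-1) * z ^ 3 + (-2) * z ^ 5 + (1) * z ^ 6 + (2) * z ^ 8 + (1) * z ^ 10 + (-1) * z ^ 13 + (-2) * z ^ 14 + (2) * z ^ 17 + (1) * z ^ 19 + (-1) * z ^ 22 + (-2) * z ^ 23 + (2) * z ^ 26 + (1) * z ^ 28 + (-1) * z ^ 32 + (-1) * z ^ 34 + (1) * z ^ 35 + (1) * z ^ 37 + (-1) * z ^ 43 + (1) * z ^ 46) * hz

theorem A2_6_0 {z : ℂ} (hz : z ^ 6 + z ^ 3 + 1 = 0) :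
    A2 z 6 0 = 0 := by
  unfold A2
  linear_combination ((3) + (-3) * z ^ 3 + (1) * z ^ 6 + (2) * z ^ 9 + (-2) * z ^ 12 + (2) * z ^ 18 + (-2) * z ^ 21 + (1) * z ^ 24 + (1) * z ^ 27 + (-1) * z ^ 30 + (1) * z ^ 36 + (-1) * z ^ 39 + (1) * z ^ 42) * hz

theorem A2_6_1 {z : ℂ} (hz : z ^ 6 + z ^ 3 + 1 = 0) :
    A2 z 6 1 = 0 := by
  unfold A2
  linear_combination ((1) + (1) * z ^ 6 + (-1) * z ^ 9 + (1) * z ^ 12 + (-1) * z ^ 18 + (1) * z ^ 21 + (-1) * z ^ 27 + (2) * z ^ 30 + (-2) * z ^ 36 + (2) * z ^ 39 + (-1) * z ^ 45 + (1) * z ^ 48) * hz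

theorem A2_6_2 {z : ℂ} (hz : z ^ 6 + z ^ 3 + 1 = 0) :
    A2 z 6 2 = 0 := by
  unfold A2
  linear_combination ((1) + (-1) * z ^ 3 + (2) * z ^ 6 + (-1) * z ^ 9 + (1) * z ^ 12 + (-1) * z ^ 18 + (1) * z ^ 21 + (-1) * z ^ 27 + (1) * z ^ 30 + (1) * z ^ 36 + (-1) * z ^ 39 + (1) * z ^ 45 + (-1) * z ^ 51 + (1) * z ^ 54) * hz

theorem A2_7_0 {z : ℂ} (hz : z ^ 6 + z ^ 3 + 1 = 0) :
    A2 z 7 0 = (3) := by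
  unfold A2
  linear_combination ((1) * z ^ 7 + (-1) * z ^ 10 + (1) * z ^ 14 + (1) * z ^ 16 + (-1) * z ^ 17 + (-1) * z ^ 19 + (1) * z ^ 23 + (1) * z ^ 25 + (-1) * z ^ 26 + (-1) * z ^ 31 + (1) * z ^ 32 + (1) * z ^ 34 + (-1) * z ^ 38 + (-1) * z ^ 40 + (1) * z ^ 41 + (1) * z ^ 43 + (-1) * z ^ 47 + (1) * z ^ 50) * hz

theorem A2_7_1 {z : ℂ} (hz : z ^ 6 + z ^ 3 + 1 = 0) :
    A2 z 7 1 = (-3) * z ^ 1 + (-3) * z ^ 4 := by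
  unfold A2
  linear_combination ((1) + (3) * z ^ 1 + (-2) * z ^ 7 + (2) * z ^ 10 + (1) * z ^ 14 + (-2) * z ^ 16 + (-1) * z ^ 17 + (2) * z ^ 19 + (1) * z ^ 23 + (-2) * z ^ 25 + (-1) * z ^ 26 + (2) * z ^ 28 + (1) * z ^ 32 + (-1) * z ^ 34 + (-1) * z ^ 35 + (1) * z ^ 37 + (1) * z ^ 38 + (-1) * z ^ 43 + (-1) * z ^ 44 + (1) * z ^ 46 + (1) * z ^ 47 + (-1) * z ^ 53 + (1) * z ^ 56) * hz

theorem A2_7_2 {z : ℂ} (hz : z ^ 6 + z ^ 3 + 1 = 0) :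
    A2 z 7 2 = (3) * z ^ 5 := by
  unfold A2
  linear_combination ((1) + (-1) * z ^ 3 + (-3) * z ^ 5 + (1) * z ^ 6 + (1) * z ^ 7 + (3) * z ^ 8 + (-1) * z ^ 10 + (-2) * z ^ 14 + (1) * z ^ 16 + (2) * z ^ 17 + (-1) * z ^ 19 + (-2) * z ^ 23 + (1) * z ^ 25 + (2) * z ^ 26 + (-1) * z ^ 28 + (-2) * z ^ 32 + (1) * z ^ 34 + (2) * z ^ 35 + (-1) * z ^ 37 + (1) * z ^ 40 + (-1) * z ^ 41 + (1) * z ^ 44 + (-1) * z ^ 46 + (1) * z ^ 49 + (-1) * z ^ 50 + (1) * z ^ 53 + (-1) * z ^ 59 + (1) * z ^ 62) * hz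

theorem A2_8_0 {z : ℂ} (hz : z ^ 6 + z ^ 3 + 1 = 0) :
    A2 z 8 0 = (3) := by
  unfold A2
  linear_combination ((1) * z ^ 8 + (-1) * z ^ 11 + (1) * z ^ 16 + (1) * z ^ 17 + (-1) * z ^ 19 + (-1) * z ^ 20 + (1) * z ^ 25 + (1) * z ^ 26 + (-1) * z ^ 28 + (-1) * z ^ 29 + (1) * z ^ 32 + (1) * z ^ 34 + (-1) * z ^ 37 + (-1) * z ^ 38 + (1) * z ^ 40 + (1) * z ^ 41 + (-1) * z ^ 46 + (-1) * z ^ 47 + (1) * z ^ 49 + (1) * z ^ 50 + (-1) * z ^ 55 + (1) * z ^ 58) * hz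

theorem A2_8_1 {z : ℂ} (hz : z ^ 6 + z ^ 3 + 1 = 0) :
    A2 z 8 1 = (-3) * z ^ 1 + (-3) * z ^ 4 := by
  unfold A2
  linear_combination ((1) + (3) * z ^ 1 + (-3) * z ^ 7 + (1) * z ^ 8 + (3) * z ^ 10 + (-1) * z ^ 11 + (-2) * z ^ 16 + (1) * z ^ 17 + (2) * z ^ 19 + (-1) * z ^ 20 + (-2) * z ^ 25 + (1) * z ^ 26 + (2) * z ^ 28 + (-1) * z ^ 29 + (-2) * z ^ 34 + (1) * z ^ 35 + (2) * z ^ 37 + (-1) * z ^ 41 + (-1) * z ^ 43 + (1) * z ^ 44 + (1) * z ^ 46 + (-1) * z ^ 50 + (-1) * z ^ 52 + (1) * z ^ 53 + (1) * z ^ 55 + (-1) * z ^ 61 + (1) * z ^ 64) * hz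

theorem A2_8_2 {z : ℂ} (hz : z ^ 6 + z ^ 3 + 1 = 0) :
    A2 z 8 2 = (-3) * z ^ 2 + (-3) * z ^ 5 := by
  unfold A2
  linear_combination ((1) + (3) * z ^ 2 + (-1) * z ^ 3 + (1) * z ^ 6 + (-2) * z ^ 8 + (2) * z ^ 11 + (1) * z ^ 16 + (-2) * z ^ 17 + (-1) * z ^ 19 + (2) * z ^ 20 + (1) * z ^ 25 + (-2) * z ^ 26 + (-1) * z ^ 28 + (2) * z ^ 29 + (1) * z ^ 34 + (-2) * z ^ 35 + (-1) * z ^ 37 + (2) * z ^ 38 + (1) * z ^ 43 + (-1) * z ^ 44 + (1) * z ^ 47 + (-1) * z ^ 49 + (1) * z ^ 52 + (-1) * z ^ 53 + (1) * z ^ 56 + (-1) * z ^ 58 + (1) * z ^ 61 + (-1) * z ^ 67 + (1) * z ^ 70) * hz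

theorem e6a {R : Type*} [CommRing R] {z : R} (x : R) (hz : z ^ 6 + z ^ 3 + 1 = 0) :
    (((3)) * x ^ 0 + ((1) + (1) * z ^ 1 + (-1) * z ^ 2 + (-1) * z ^ 5) * x ^ 1 + ((1)) * x ^ 2) * (((3)) * x ^ 0 + ((1) + (-1) * z ^ 1 + (1) * z ^ 2 + (-1) * z ^ 4) * x ^ 1 + ((1)) * x ^ 2)
      = ((9)) * x ^ 0 + ((6) + (-3) * z ^ 4 + (-3) * z ^ 5) * x ^ 1 + ((6) + (1) * z ^ 1 + (-1) * z ^ 2 + (-1) * z ^ 4 + (-2) * z ^ 5) * x ^ 2 + ((2) + (-1) * z ^ 4 + (-1) * z ^ 5) * x ^ 3 + ((1)) * x ^ 4 := by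
  linear_combination (((1) + (-1) * z ^ 1 + (1) * z ^ 3) * x ^ 2) * hz

theorem e6b {R : Type*} [CommRing R] {z : R} (x : R) (hz : z ^ 6 + z ^ 3 + 1 = 0) :
    (((9)) * x ^ 0 + ((6) + (-3) * z ^ 4 + (-3) * z ^ 5) * x ^ 1 + ((6) + (1) * z ^ 1 + (-1) * z ^ 2 + (-1) * z ^ 4 + (-2) * z ^ 5) * x ^ 2 + ((2) + (-1) * z ^ 4 + (-1) * z ^ 5) * x ^ 3 + ((1)) * x ^ 4) * (((3)) * x ^ 0 + ((1) + (1) * z ^ 4 + (1) * z ^ 5) * x ^ 1 + ((1)) * x ^ 2)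
      = ((27)) * x ^ 0 + ((27)) * x ^ 1 + ((27)) * x ^ 2 + ((15)) * x ^ 3 + ((9)) * x ^ 4 + ((3)) * x ^ 5 + ((1)) * x ^ 6 := by
  linear_combination (((6) + (3) * z ^ 1 + (-3) * z ^ 2 + (-6) * z ^ 3 + (-3) * z ^ 4) * x ^ 2 + ((3) + (1) * z ^ 1 + (-1) * z ^ 2 + (-3) * z ^ 3 + (-2) * z ^ 4) * x ^ 3 + ((2) + (1) * z ^ 1 + (-1) * z ^ 2 + (-2) * z ^ 3 + (-1) * z ^ 4) * x ^ 4) * hz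

theorem e12a {R : Type*} [CommRing R] {z : R} (x : R) (hz : z ^ 6 + z ^ 3 + 1 = 0) :
    (((3) * z ^ 1) * x ^ 0 + ((1) + (1) * z ^ 1 + (1) * z ^ 5) * x ^ 1 + ((1)) * x ^ 2) * (((-3) * z ^ 2 + (-3) * z ^ 5) * x ^ 0 + ((1) + (-1) * z ^ 2 + (1) * z ^ 4 + (-1) * z ^ 5) * x ^ 1 + ((1)) * x ^ 2)
      = ((9)) * x ^ 0 + ((6) + (3) * z ^ 1 + (-3) * z ^ 2 + (3) * z ^ 4) * x ^ 1 + ((3) + (4) * z ^ 1 + (-4) * z ^ 2 + (2) * z ^ 4 + (-2) * z ^ 5) * x ^ 2 + ((2) + (1) * z ^ 1 + (-1) * z ^ 2 + (1) * z ^ 4) * x ^ 3 + ((1)) * x ^ 4 := by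
  linear_combination (((-9)) * x ^ 0 + ((-6) + (-3) * z ^ 4) * x ^ 1 + ((-2) + (1) * z ^ 3 + (-1) * z ^ 4) * x ^ 2) * hz

theorem e12b {R : Type*} [CommRing R] {z : R} (x : R) (hz : z ^ 6 + z ^ 3 + 1 = 0) :
    (((3) * z ^ 2) * x ^ 0 + ((1) + (1) * z ^ 1 + (1) * z ^ 2) * x ^ 1 + ((1)) * x ^ 2) * (((-3) * z ^ 1 + (-3) * z ^ 4) * x ^ 0 + ((1) + (-1) * z ^ 1 + (-1) * z ^ 2 + (-1) * z ^ 4 + (-1) * z ^ 5) * x ^ 1 + ((1)) * x ^ 2)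
      = ((9)) * x ^ 0 + ((6) + (-3) * z ^ 4 + (-3) * z ^ 5) * x ^ 1 + ((3) + (-2) * z ^ 1 + (2) * z ^ 2 + (-4) * z ^ 4 + (-2) * z ^ 5) * x ^ 2 + ((2) + (-1) * z ^ 4 + (-1) * z ^ 5) * x ^ 3 + ((1)) * x ^ 4 := by
  linear_combination (((-9)) * x ^ 0 + ((-6) + (-3) * z ^ 1) * x ^ 1 + ((-2) + (-1) * z ^ 1) * x ^ 2) * hz

theorem e12c {R : Type*} [CommRing R] {z : R} (x : R) (hz : z ^ 6 + z ^ 3 + 1 = 0) :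
    (((3) * z ^ 4) * x ^ 0 + ((1) + (1) * z ^ 2 + (1) * z ^ 4) * x ^ 1 + ((1)) * x ^ 2) * (((3) * z ^ 5) * x ^ 0 + ((1) + (-1) * z ^ 1 + (-1) * z ^ 4 + (1) * z ^ 5) * x ^ 1 + ((1)) * x ^ 2)
      = ((9)) * x ^ 0 + ((6) + (-3) * z ^ 1 + (3) * z ^ 2 + (3) * z ^ 5) * x ^ 1 + ((3) + (-2) * z ^ 1 + (2) * z ^ 2 + (2) * z ^ 4 + (4) * z ^ 5) * x ^ 2 + ((2) + (-1) * z ^ 1 + (1) * z ^ 2 + (1) * z ^ 5) * x ^ 3 + ((1)) * x ^ 4 := by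
  linear_combination (((-9) + (9) * z ^ 3) * x ^ 0 + ((-6) + (3) * z ^ 1 + (-3) * z ^ 2 + (6) * z ^ 3) * x ^ 1 + ((-2) + (1) * z ^ 1 + (-1) * z ^ 2 + (1) * z ^ 3) * x ^ 2) * hz

theorem e12d {R : Type*} [CommRing R] {z : R} (x : R) (hz : z ^ 6 + z ^ 3 + 1 = 0) :
    (((9)) * x ^ 0 + ((6) + (3) * z ^ 1 + (-3) * z ^ 2 + (3) * z ^ 4) * x ^ 1 + ((3) + (4) * z ^ 1 + (-4) * z ^ 2 + (2) * z ^ 4 + (-2) * z ^ 5) * x ^ 2 + ((2) + (1) * z ^ 1 + (-1) * z ^ 2 + (1) * z ^ 4) * x ^ 3 + ((1)) * x ^ 4) * (((9)) * x ^ 0 + ((6) + (-3) * z ^ 4 + (-3) * z ^ 5) * x ^ 1 + ((3) + (-2) * z ^ 1 + (2) * z ^ 2 + (-4) * z ^ 4 + (-2) * z ^ 5) * x ^ 2 + ((2) + (-1) * z ^ 4 + (-1) * z ^ 5) * x ^ 3 + ((1)) * x ^ 4)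
      = ((81)) * x ^ 0 + ((108) + (27) * z ^ 1 + (-27) * z ^ 2 + (-27) * z ^ 5) * x ^ 1 + ((81) + (27) * z ^ 1 + (-27) * z ^ 2 + (-27) * z ^ 4 + (-54) * z ^ 5) * x ^ 2 + ((54) + (18) * z ^ 1 + (-18) * z ^ 2 + (-36) * z ^ 4 + (-54) * z ^ 5) * x ^ 3 + ((33) + (12) * z ^ 1 + (-12) * z ^ 2 + (-24) * z ^ 4 + (-36) * z ^ 5) * x ^ 4 + ((18) + (6) * z ^ 1 + (-6) * z ^ 2 + (-12) * z ^ 4 + (-18) * z ^ 5) * x ^ 5 + ((9) + (3) * z ^ 1 + (-3) * z ^ 2 + (-3) * z ^ 4 + (-6) * z ^ 5) * x ^ 6 + ((4) + (1) * z ^ 1 + (-1) * z ^ 2 + (-1) * z ^ 5) * x ^ 7 + ((1)) * x ^ 8 := by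
  linear_combination (((9) + (9) * z ^ 1 + (-9) * z ^ 2 + (-9) * z ^ 3) * x ^ 2 + ((18) + (12) * z ^ 1 + (-18) * z ^ 2 + (-6) * z ^ 3 + (6) * z ^ 4) * x ^ 3 + ((18) + (6) * z ^ 1 + (-14) * z ^ 2 + (-2) * z ^ 3 + (4) * z ^ 4) * x ^ 4 + ((6) + (4) * z ^ 1 + (-6) * z ^ 2 + (-2) * z ^ 3 + (2) * z ^ 4) * x ^ 5 + ((1) + (1) * z ^ 1 + (-1) * z ^ 2 + (-1) * z ^ 3) * x ^ 6) * hz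

theorem e12e {R : Type*} [CommRing R] {z : R} (x : R) (hz : z ^ 6 + z ^ 3 + 1 = 0) :
    (((81)) * x ^ 0 + ((108) + (27) * z ^ 1 + (-27) * z ^ 2 + (-27) * z ^ 5) * x ^ 1 + ((81) + (27) * z ^ 1 + (-27) * z ^ 2 + (-27) * z ^ 4 + (-54) * z ^ 5) * x ^ 2 + ((54) + (18) * z ^ 1 + (-18) * z ^ 2 + (-36) * z ^ 4 + (-54) * z ^ 5) * x ^ 3 + ((33) + (12) * z ^ 1 + (-12) * z ^ 2 + (-24) * z ^ 4 + (-36) * z ^ 5) * x ^ 4 + ((18) + (6) * z ^ 1 + (-6) * z ^ 2 + (-12) * z ^ 4 + (-18) * z ^ 5) * x ^ 5 + ((9) + (3) * z ^ 1 + (-3) * z ^ 2 + (-3) * z ^ 4 + (-6) * z ^ 5) * x ^ 6 + ((4) + (1) * z ^ 1 + (-1) * z ^ 2 + (-1) * z ^ 5) * x ^ 7 + ((1)) * x ^ 8) * (((9)) * x ^ 0 + ((6) + (-3) * z ^ 1 + (3) * z ^ 2 + (3) * z ^ 5) * x ^ 1 + ((3) + (-2) * z ^ 1 + (2) * z ^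 2 + (2) * z ^ 4 + (4) * z ^ 5) * x ^ 2 + ((2) + (-1) * z ^ 1 + (1) * z ^ 2 + (1) * z ^ 5) * x ^ 3 + ((1)) * x ^ 4)
      = ((729)) * x ^ 0 + ((1458)) * x ^ 1 + ((1458)) * x ^ 2 + ((1053)) * x ^ 3 + ((567)) * x ^ 4 + ((243)) * x ^ 5 + ((117)) * x ^ 6 + ((81)) * x ^ 7 + ((63)) * x ^ 8 + ((39)) * x ^ 9 + ((18)) * x ^ 10 + ((6)) * x ^ 11 + ((1)) * x ^ 12 := by
  linear_combination (((162) + (-81) * z ^ 1 + (-81) * z ^ 4) * x ^ 2 + ((405) + (-135) * z ^ 1 + (-135) * z ^ 3 + (-270) * z ^ 4) * x ^ 3 + ((594) + (-81) * z ^ 1 + (-54) * z ^ 2 + (-324) * z ^ 3 + (-405) * z ^ 4) * x ^ 4 + ((549) + (-27) * z ^ 1 + (-72) * z ^ 2 + (-351) * z ^ 3 + (-378) * z ^ 4) * x ^ 5 + ((360) + (-12) * z ^ 1 + (-48) * z ^ 2 + (-240) * z ^ 3 + (-252) * z ^ 4) * x ^ 6 + ((183) + (-9) * z ^ 1 + (-24)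 * z ^ 2 + (-117) * z ^ 3 + (-126) * z ^ 4) * x ^ 7 + ((66) + (-9) * z ^ 1 + (-6) * z ^ 2 + (-36) * z ^ 3 + (-45) * z ^ 4) * x ^ 8 + ((15) + (-5) * z ^ 1 + (-5) * z ^ 3 + (-10) * z ^ 4) * x ^ 9 + ((2) + (-1) * z ^ 1 + (-1) * z ^ 4) * x ^ 10) * hz

theorem e22a {R : Type*} [CommRing R] {z : R} (x : R) (hz : z ^ 6 + z ^ 3 + 1 = 0) :
    (((1) + (-1) * z ^ 3) * x ^ 1 + ((1)) * x ^ 2) * (((2) + (1) * z ^ 3) * x ^ 1 + ((1)) * x ^ 2)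
      = ((3)) * x ^ 2 + ((3)) * x ^ 3 + ((1)) * x ^ 4 := by
  linear_combination (((-1)) * x ^ 2) * hz

theorem e23a {R : Type*} [CommRing R] {z : R} (x : R) (hz : z ^ 6 + z ^ 3 + 1 = 0) :
    (((1) + (2) * z ^ 3) * x ^ 1 + ((1)) * x ^ 2) * (((-1) + (-2) * z ^ 3) * x ^ 1 + ((1)) * x ^ 2)
      = ((3)) * x ^ 2 + ((1)) * x ^ 4 := by
  linear_combination (((-4)) * x ^ 2) * hz

theorem Q_1_0 {z : ℂ} (hz : z ^ 6 + z ^ 3 + 1 = 0) :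
    QQ (A1 z 1 0) (A2 z 1 0) = ((3)) * X ^ 0 + ((1) + (1) * (C z) ^ 1 + (-1) * (C z) ^ 2 + (-1) * (C z) ^ 5) * X ^ 1 + ((1)) * X ^ 2 := by
  rw [A1_1_0 hz, A2_1_0 hz, QQ]
  simp only [map_add, map_mul, map_pow, map_neg, map_one, map_ofNat, map_zero]
  ring

theorem Q_2_0 {z : ℂ} (hz : z ^ 6 + z ^ 3 + 1 = 0) :
    QQ (A1 z 2 0) (A2 z 2 0) = ((3)) * X ^ 0 + ((1) + (-1) * (C z) ^ 1 + (1) * (C z) ^ 2 + (-1) * (C z) ^ 4) * X ^ 1 + ((1)) * X ^ 2 := by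
  rw [A1_2_0 hz, A2_2_0 hz, QQ]
  simp only [map_add, map_mul, map_pow, map_neg, map_one, map_ofNat, map_zero]
  ring

theorem Q_4_0 {z : ℂ} (hz : z ^ 6 + z ^ 3 + 1 = 0) :
    QQ (A1 z 4 0) (A2 z 4 0) = ((3)) * X ^ 0 + ((1) + (1) * (C z) ^ 4 + (1) * (C z) ^ 5) * X ^ 1 + ((1)) * X ^ 2 := by
  rw [A1_4_0 hz, A2_4_0 hz, QQ]
  simp only [map_add, map_mul, map_pow, map_neg, map_one, map_ofNat, map_zero]
  ring

theorem Q_1_1 {z : ℂ} (hz : z ^ 6 + z ^ 3 + 1 = 0) :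
    QQ (A1 z 1 1) (A2 z 1 1) = ((3) * (C z) ^ 1) * X ^ 0 + ((1) + (1) * (C z) ^ 1 + (1) * (C z) ^ 5) * X ^ 1 + ((1)) * X ^ 2 := by
  rw [A1_1_1 hz, A2_1_1 hz, QQ]
  simp only [map_add, map_mul, map_pow, map_neg, map_one, map_ofNat, map_zero]
  ring

theorem Q_8_2 {z : ℂ} (hz : z ^ 6 + z ^ 3 + 1 = 0) :
    QQ (A1 z 8 2) (A2 z 8 2) = ((-3) * (C z) ^ 2 + (-3) * (C z) ^ 5) * X ^ 0 + ((1) + (-1) * (C z) ^ 2 + (1) * (C z) ^ 4 + (-1) * (C z) ^ 5) * X ^ 1 + ((1)) * X ^ 2 := by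
  rw [A1_8_2 hz, A2_8_2 hz, QQ]
  simp only [map_add, map_mul, map_pow, map_neg, map_one, map_ofNat, map_zero]
  ring

theorem Q_2_2 {z : ℂ} (hz : z ^ 6 + z ^ 3 + 1 = 0) :
    QQ (A1 z 2 2) (A2 z 2 2) = ((3) * (C z) ^ 2) * X ^ 0 + ((1) + (1) * (C z) ^ 1 + (1) * (C z) ^ 2) * X ^ 1 + ((1)) * X ^ 2 := by
  rw [A1_2_2 hz, A2_2_2 hz, QQ]
  simp only [map_add, map_mul, map_pow, map_neg, map_one, map_ofNat, map_zero]
  ring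

theorem Q_7_1 {z : ℂ} (hz : z ^ 6 + z ^ 3 + 1 = 0) :
    QQ (A1 z 7 1) (A2 z 7 1) = ((-3) * (C z) ^ 1 + (-3) * (C z) ^ 4) * X ^ 0 + ((1) + (-1) * (C z) ^ 1 + (-1) * (C z) ^ 2 + (-1) * (C z) ^ 4 + (-1) * (C z) ^ 5) * X ^ 1 + ((1)) * X ^ 2 := by
  rw [A1_7_1 hz, A2_7_1 hz, QQ]
  simp only [map_add, map_mul, map_pow, map_neg, map_one, map_ofNat, map_zero]
  ring

theorem Q_4_1 {z : ℂ} (hz : z ^ 6 + z ^ 3 + 1 = 0) :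
    QQ (A1 z 4 1) (A2 z 4 1) = ((3) * (C z) ^ 4) * X ^ 0 + ((1) + (1) * (C z) ^ 2 + (1) * (C z) ^ 4) * X ^ 1 + ((1)) * X ^ 2 := by
  rw [A1_4_1 hz, A2_4_1 hz, QQ]
  simp only [map_add, map_mul, map_pow, map_neg, map_one, map_ofNat, map_zero]
  ring

theorem Q_5_2 {z : ℂ} (hz : z ^ 6 + z ^ 3 + 1 = 0) :
    QQ (A1 z 5 2) (A2 z 5 2) = ((3) * (C z) ^ 5) * X ^ 0 + ((1) + (-1) * (C z) ^ 1 + (-1) * (C z) ^ 4 + (1) * (C z) ^ 5) * X ^ 1 + ((1)) * X ^ 2 := by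
  rw [A1_5_2 hz, A2_5_2 hz, QQ]
  simp only [map_add, map_mul, map_pow, map_neg, map_one, map_ofNat, map_zero]
  ring

theorem Q_0_1 {z : ℂ} (hz : z ^ 6 + z ^ 3 + 1 = 0) :
    QQ (A1 z 0 1) (A2 z 0 1) = ((1) + (-1) * (C z) ^ 3) * X ^ 1 + ((1)) * X ^ 2 := by
  rw [A1_0_1 hz, A2_0_1 hz, QQ]
  simp only [map_add, map_mul, map_pow, map_neg, map_one, map_ofNat, map_zero]
  ring

theorem Q_0_2 {z : ℂ} (hz : z ^ 6 + z ^ 3 + 1 = 0) :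
    QQ (A1 z 0 2) (A2 z 0 2) = ((2) + (1) * (C z) ^ 3) * X ^ 1 + ((1)) * X ^ 2 := by
  rw [A1_0_2 hz, A2_0_2 hz, QQ]
  simp only [map_add, map_mul, map_pow, map_neg, map_one, map_ofNat, map_zero]
  ring

theorem Q_3_1 {z : ℂ} (hz : z ^ 6 + z ^ 3 + 1 = 0) :
    QQ (A1 z 3 1) (A2 z 3 1) = ((1) + (2) * (C z) ^ 3) * X ^ 1 + ((1)) * X ^ 2 := by
  rw [A1_3_1 hz, A2_3_1 hz, QQ]
  simp only [map_add, map_mul, map_pow, map_neg, map_one, map_ofNat, map_zero]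
  ring

theorem Q_6_2 {z : ℂ} (hz : z ^ 6 + z ^ 3 + 1 = 0) :
    QQ (A1 z 6 2) (A2 z 6 2) = ((-1) + (-2) * (C z) ^ 3) * X ^ 1 + ((1)) * X ^ 2 := by
  rw [A1_6_2 hz, A2_6_2 hz, QQ]
  simp only [map_add, map_mul, map_pow, map_neg, map_one, map_ofNat, map_zero]
  ring

theorem Q_8_0 {z : ℂ} (hz : z ^ 6 + z ^ 3 + 1 = 0) :
    QQ (A1 z 8 0) (A2 z 8 0) = QQ (A1 z 1 0) (A2 z 1 0) := by
  rw [A1_8_0 hz, A2_8_0 hz, A1_1_0 hz, A2_1_0 hz]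

theorem Q_7_0 {z : ℂ} (hz : z ^ 6 + z ^ 3 + 1 = 0) :
    QQ (A1 z 7 0) (A2 z 7 0) = QQ (A1 z 2 0) (A2 z 2 0) := by
  rw [A1_7_0 hz, A2_7_0 hz, A1_2_0 hz, A2_2_0 hz]

theorem Q_5_0 {z : ℂ} (hz : z ^ 6 + z ^ 3 + 1 = 0) :
    QQ (A1 z 5 0) (A2 z 5 0) = QQ (A1 z 4 0) (A2 z 4 0) := by
  rw [A1_5_0 hz, A2_5_0 hz, A1_4_0 hz, A2_4_0 hz]

theorem Q_1_2 {z : ℂ} (hz : z ^ 6 + z ^ 3 + 1 = 0) :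
    QQ (A1 z 1 2) (A2 z 1 2) = QQ (A1 z 2 2) (A2 z 2 2) := by
  rw [A1_1_2 hz, A2_1_2 hz, A1_2_2 hz, A2_2_2 hz]

theorem Q_8_1 {z : ℂ} (hz : z ^ 6 + z ^ 3 + 1 = 0) :
    QQ (A1 z 8 1) (A2 z 8 1) = QQ (A1 z 7 1) (A2 z 7 1) := by
  rw [A1_8_1 hz, A2_8_1 hz, A1_7_1 hz, A2_7_1 hz]

theorem Q_2_1 {z : ℂ} (hz : z ^ 6 + z ^ 3 + 1 = 0) :
    QQ (A1 z 2 1) (A2 z 2 1) = QQ (A1 z 4 1) (A2 z 4 1) := by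
  rw [A1_2_1 hz, A2_2_1 hz, A1_4_1 hz, A2_4_1 hz]

theorem Q_7_2 {z : ℂ} (hz : z ^ 6 + z ^ 3 + 1 = 0) :
    QQ (A1 z 7 2) (A2 z 7 2) = QQ (A1 z 5 2) (A2 z 5 2) := by
  rw [A1_7_2 hz, A2_7_2 hz, A1_5_2 hz, A2_5_2 hz]

theorem Q_4_2 {z : ℂ} (hz : z ^ 6 + z ^ 3 + 1 = 0) :
    QQ (A1 z 4 2) (A2 z 4 2) = QQ (A1 z 8 2) (A2 z 8 2) := by
  rw [A1_4_2 hz, A2_4_2 hz, A1_8_2 hz, A2_8_2 hz]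

theorem Q_5_1 {z : ℂ} (hz : z ^ 6 + z ^ 3 + 1 = 0) :
    QQ (A1 z 5 1) (A2 z 5 1) = QQ (A1 z 1 1) (A2 z 1 1) := by
  rw [A1_5_1 hz, A2_5_1 hz, A1_1_1 hz, A2_1_1 hz]

theorem Q_3_2 {z : ℂ} (hz : z ^ 6 + z ^ 3 + 1 = 0) :
    QQ (A1 z 3 2) (A2 z 3 2) = QQ (A1 z 0 2) (A2 z 0 2) := by
  rw [A1_3_2 hz, A2_3_2 hz, A1_0_2 hz, A2_0_2 hz]

theorem Q_6_1 {z : ℂ} (hz : z ^ 6 + z ^ 3 + 1 = 0) :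
    QQ (A1 z 6 1) (A2 z 6 1) = QQ (A1 z 0 1) (A2 z 0 1) := by
  rw [A1_6_1 hz, A2_6_1 hz, A1_0_1 hz, A2_0_1 hz]

theorem Q_3_0 {z : ℂ} (hz : z ^ 6 + z ^ 3 + 1 = 0) :
    QQ (A1 z 3 0) (A2 z 3 0) = X * X := by
  rw [A1_3_0 hz, A2_3_0 hz, QQ]
  simp only [map_zero]
  ring

theorem Q_6_0 {z : ℂ} (hz : z ^ 6 + z ^ 3 + 1 = 0) :
    QQ (A1 z 6 0) (A2 z 6 0) = X * X := by
  rw [A1_6_0 hz, A2_6_0 hz, QQ]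
  simp only [map_zero]
  ring

/-- root power sum of the quadratic attached to the character `(i, j)` -/
noncomputable def RR (n : ℕ) (z : ℂ) (i j : ℕ) : ℂ := rr n (QQ (A1 z i j) (A2 z i j))

theorem hCz {z : ℂ} (hz : z ^ 6 + z ^ 3 + 1 = 0) : (C z) ^ 6 + (C z) ^ 3 + 1 = (0 : ℂ[X]) := by
  have := congrArg (C : ℂ →+* ℂ[X]) hz
  simpa using this

theorem rho_e6 (n : ℕ) {z : ℂ} (hz : z ^ 6 + z ^ 3 + 1 = 0) :
    rho n e6 = RR n z 1 0 + RR n z 2 0 + RR n z 4 0 := by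
  unfold RR
  rw [← rr_mul n (QQ_ne _ _) (QQ_ne _ _), ← rr_mul n (mul_ne_zero (QQ_ne _ _) (QQ_ne _ _)) (QQ_ne _ _),
    Q_1_0 hz, Q_2_0 hz, Q_4_0 hz, e6a X (hCz hz), e6b X (hCz hz)]
  change rr n _ = _
  congr 1
  simp [e6]
  ring

theorem rho_e12 (n : ℕ) {z : ℂ} (hz : z ^ 6 + z ^ 3 + 1 = 0) :
    rho n e12 = ((RR n z 1 1 + RR n z 8 2) + (RR n z 2 2 + RR n z 7 1))
      + (RR n z 4 1 + RR n z 5 2) := by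
  unfold RR
  rw [← rr_mul n (QQ_ne _ _) (QQ_ne _ _), ← rr_mul n (QQ_ne _ _) (QQ_ne _ _),
    ← rr_mul n (QQ_ne _ _) (QQ_ne _ _),
    ← rr_mul n (mul_ne_zero (QQ_ne _ _) (QQ_ne _ _)) (mul_ne_zero (QQ_ne _ _) (QQ_ne _ _)),
    ← rr_mul n (mul_ne_zero (mul_ne_zero (QQ_ne _ _) (QQ_ne _ _))
      (mul_ne_zero (QQ_ne _ _) (QQ_ne _ _))) (mul_ne_zero (QQ_ne _ _) (QQ_ne _ _)),
    Q_1_1 hz, Q_8_2 hz, Q_2_2 hz, Q_7_1 hz, Q_4_1 hz, Q_5_2 hz,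
    e12a X (hCz hz), e12b X (hCz hz), e12c X (hCz hz), e12d X (hCz hz), e12e X (hCz hz)]
  change rr n _ = _
  congr 1
  simp [e12]
  ring

theorem rr_mul_XX {n : ℕ} (hn : n ≠ 0) {p : ℂ[X]} (hp : p ≠ 0) : rr n (p * (X * X)) = rr n p := by
  rw [rr_mul n hp (mul_ne_zero X_ne_zero X_ne_zero), rr_mul n X_ne_zero X_ne_zero, rr_X hn]
  simp

theorem rho_e22 {n : ℕ} (hn : n ≠ 0) {z : ℂ} (hz : z ^ 6 + z ^ 3 + 1 = 0) :
    rho n e22 = RR n z 0 1 + RR n z 0 2 := by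
  unfold RR
  rw [← rr_mul n (QQ_ne _ _) (QQ_ne _ _), Q_0_1 hz, Q_0_2 hz, e22a X (hCz hz)]
  have h : e22.map (Int.castRingHom ℂ) = QQ 3 3 := by simp [e22, QQ, show (C (3 : ℂ)) = 3 from map_ofNat C 3]
  change rr n _ = _
  rw [h, ← rr_mul_XX hn (QQ_ne _ _)]
  congr 1
  simp only [QQ, map_ofNat]
  ring

theorem rho_e23 {n : ℕ} (hn : n ≠ 0) {z : ℂ} (hz : z ^ 6 + z ^ 3 + 1 = 0) :
    rho n e23 = RR n z 3 1 + RR n z 6 2 := by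
  unfold RR
  rw [← rr_mul n (QQ_ne _ _) (QQ_ne _ _), Q_3_1 hz, Q_6_2 hz, e23a X (hCz hz)]
  have h : e23.map (Int.castRingHom ℂ) = QQ 0 3 := by simp [e23, QQ, show (C (3 : ℂ)) = 3 from map_ofNat C 3]
  change rr n _ = _
  rw [h, ← rr_mul_XX hn (QQ_ne _ _)]
  congr 1
  simp only [QQ, map_ofNat, map_zero]
  ring

theorem RR_30 {n : ℕ} (hn : n ≠ 0) {z : ℂ} (hz : z ^ 6 + z ^ 3 + 1 = 0) : RR n z 3 0 = 0 := by
  rw [RR, Q_3_0 hz, rr_mul n X_ne_zero X_ne_zero, rr_X hn, add_zero]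

theorem RR_60 {n : ℕ} (hn : n ≠ 0) {z : ℂ} (hz : z ^ 6 + z ^ 3 + 1 = 0) : RR n z 6 0 = 0 := by
  rw [RR, Q_6_0 hz, rr_mul n X_ne_zero X_ne_zero, rr_X hn, add_zero]

theorem exists_char : ∃ (z : ℂ) (e : AddChar (ZMod 9) ℂ), z ^ 6 + z ^ 3 + 1 = 0 ∧ e 3 ≠ 1 ∧
    ∀ k : ℕ, e (k : ZMod 9) = z ^ k := by
  have hp := Complex.isPrimitiveRoot_exp 9 (by norm_num)
  set z := Complex.exp (2 * Real.pi * Complex.I / (9 : ℕ)) with hzdef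
  have h9 : z ^ 9 = 1 := hp.pow_eq_one
  have h3 : z ^ 3 ≠ 1 := hp.pow_ne_one_of_pos_of_lt (by norm_num) (by norm_num)
  have hk : ∀ k : ℕ, AddChar.zmodChar 9 h9 (k : ZMod 9) = z ^ k :=
    fun k => AddChar.zmodChar_apply' h9 k
  refine ⟨z, AddChar.zmodChar 9 h9, ?_, ?_, hk⟩
  · have : (z ^ 3 - 1) * (z ^ 6 + z ^ 3 + 1) = 0 := by linear_combination h9
    exact (mul_eq_zero.1 this).resolve_left (sub_ne_zero.2 h3)
  · have := hk 3
    rw [Nat.cast_ofNat] at this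
    rw [this]; exact h3

open Classical in
theorem count_eq {n : ℕ} (hn : 3 ≤ n) {K : Type} [Field K] [Fintype K] [Algebra F3 K]
    (hK : Fintype.card K = 3 ^ n) {z : ℂ} (e : AddChar (ZMod 9) ℂ) (h3 : e 3 ≠ 1)
    (he : ∀ k : ℕ, e (k : ZMod 9) = z ^ k) :
    27 * (Nat.card {a : K // traceFn 3 n 1 a = 0 ∧ traceFn 3 n 2 a = 0 ∧ traceFn 3 n 3 a = 0} : ℂ)
      = ∑ i : Fin 9, ∑ j : Fin 3, if i = 0 ∧ j = 0 then (3 : ℂ) ^ n else - RR n z i j := by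
  have hS : ∀ (i : Fin 9) (j : Fin 3), ∑ a : K, ch e (i : ℕ) (j : ℕ) (cp n a)
      = if i = 0 ∧ j = 0 then (3 : ℂ) ^ n else - RR n z i j := by
    intro i j
    split_ifs with h
    · obtain ⟨rfl, rfl⟩ := h
      simp [ch, hK]
    · rw [sum_cp (by omega) hK (ch_one e _ _) (fun f g hf hg => ch_mul e _ _ hf hg),
        SS_rr (ch_one e _ _) (fun f g hf hg => ch_mul e _ _ hf hg)
          (AA3_zero e h3 i j (by tauto)) n (by omega), AA1_eq e he, AA2_eq e he, RR]
  simp_rw [← hS]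
  rw [Nat.card_eq_fintype_card, Fintype.card_subtype, Finset.card_filter]
  push_cast
  rw [Finset.mul_sum]
  have : ∀ a : K, (27 : ℂ) * (if traceFn 3 n 1 a = 0 ∧ traceFn 3 n 2 a = 0 ∧ traceFn 3 n 3 a = 0
      then 1 else 0) = ∑ i : Fin 9, ∑ j : Fin 3, ch e (i : ℕ) (j : ℕ) (cp n a) := by
    intro a
    have := orth e h3 (rc (cp n a) 1) (rc (cp n a) 2) (rc (cp n a) 3)
    simp only [rc_cp hK a 1 (by omega), rc_cp hK a 2 (by omega), rc_cp hK a 3 hn] at this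
    unfold ch
    unfold chv at this
    rw [this]
    split_ifs <;> simp
  rw [Finset.sum_congr rfl fun a _ => this a, Finset.sum_comm]
  exact Finset.sum_congr rfl fun i _ => Finset.sum_comm

theorem statement19 (n : ℕ) (hn : 3 ≤ n)
    (K : Type) [Field K] [Fintype K] (hK : Fintype.card K = 3 ^ n) :
    (Nat.card {a : K // traceFn 3 n 1 a = 0 ∧ traceFn 3 n 2 a = 0 ∧ traceFn 3 n 3 a = 0} : ℂ)
      = 3 ^ (n - 3) - (1 / 27) *
          (2 * rho n e22 + rho n e23 + 2 * rho n e6 + 2 * rho n e12) := by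
  haveI hc : CharP K 3 := by
    obtain ⟨p, hp⟩ := CharP.exists K
    obtain ⟨m, hpp, hm⟩ := FiniteField.card K p
    have h : p ∣ 3 ^ n := by
      rw [← hK, hm]; exact dvd_pow_self p m.ne_zero
    have := (Nat.prime_dvd_prime_iff_eq hpp Nat.prime_three).1 (hpp.dvd_of_dvd_pow h)
    rwa [this] at hp
  letI : Algebra F3 K := ZMod.algebra K 3
  obtain ⟨z, e, hz, h3, he⟩ := exists_char
  have hn0 : n ≠ 0 := by omega
  have key := count_eq hn hK e h3 he
  rw [rho_e22 hn0 hz, rho_e23 hn0 hz, rho_e6 n hz, rho_e12 n hz]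
  obtain ⟨m, rfl⟩ : ∃ m, n = m + 3 := ⟨n - 3, by omega⟩
  have hsum : (∑ i : Fin 9, ∑ j : Fin 3,
      if i = 0 ∧ j = 0 then (3 : ℂ) ^ (m + 3) else - RR (m + 3) z i j)
      = 3 ^ (m + 3) - RR (m + 3) z 0 1 - RR (m + 3) z 0 2
        - RR (m + 3) z 1 0 - RR (m + 3) z 1 1 - RR (m + 3) z 1 2
        - RR (m + 3) z 2 0 - RR (m + 3) z 2 1 - RR (m + 3) z 2 2
        - RR (m + 3) z 3 0 - RR (m + 3) z 3 1 - RR (m + 3) z 3 2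
        - RR (m + 3) z 4 0 - RR (m + 3) z 4 1 - RR (m + 3) z 4 2
        - RR (m + 3) z 5 0 - RR (m + 3) z 5 1 - RR (m + 3) z 5 2
        - RR (m + 3) z 6 0 - RR (m + 3) z 6 1 - RR (m + 3) z 6 2
        - RR (m + 3) z 7 0 - RR (m + 3) z 7 1 - RR (m + 3) z 7 2
        - RR (m + 3) z 8 0 - RR (m + 3) z 8 1 - RR (m + 3) z 8 2 := by
    simp [Fin.sum_univ_succ]
    ring
  rw [hsum, RR_30 hn0 hz, RR_60 hn0 hz] at key
  have hR : ∀ i j i' j' : ℕ, QQ (A1 z i j) (A2 z i j) = QQ (A1 z i' j') (A2 z i' j') →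
      RR (m + 3) z i j = RR (m + 3) z i' j' := fun i j i' j' h => by rw [RR, h, RR]
  rw [hR _ _ _ _ (Q_8_0 hz),
    hR _ _ _ _ (Q_7_0 hz),
    hR _ _ _ _ (Q_5_0 hz),
    hR _ _ _ _ (Q_1_2 hz),
    hR _ _ _ _ (Q_8_1 hz),
    hR _ _ _ _ (Q_2_1 hz),
    hR _ _ _ _ (Q_7_2 hz),
    hR _ _ _ _ (Q_4_2 hz),
    hR _ _ _ _ (Q_5_1 hz),
    hR _ _ _ _ (Q_3_2 hz),
    hR _ _ _ _ (Q_6_1 hz)] at key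
  rw [Nat.add_sub_cancel]
  linear_combination key / 27
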